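/- arXiv:2201.00984 — 2 statements merged into one kernel-verified Lean document; each statement's English description precedes it below -/
import Mathlib

section
/- Let (R, m, k) be a commutative Noetherian local ring, let x ∈ m ∖ m² be an R-regular element, and let M be a finitely generated R-module with xM = 0. Set R' = R/(x) and β_n^R(M) = dim_k Tor_n^R(M, k), β_n^{R'}(M) = dim_k Tor_n^{R'}(M, k). Then for all n ≥ 2 one has β_{n−1}^{R'}(M) ≤ β_n^R(M) ≤ β_n^{R'}(M) + β_{n−1}^{R'}(M). Consequently M has the same complexity and the same curvature over R and over R'. -/
open CategoryTheory IsLocalRing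
section Prelim

variable (R : Type) [CommRing R]

/-- `Tor_i^R(M, N) = 0`. -/
noncomputable def TorVanish (M N : Type) [AddCommGroup M] [Module R M]
    [AddCommGroup N] [Module R N] (i : ℕ) : Prop :=
  Subsingleton (((Tor (ModuleCat R) i).obj (ModuleCat.of R M)).obj (ModuleCat.of R N))

/-- `Ext_R^i(M, N) = 0`. -/
noncomputable def ExtVanish (M N : Type) [AddCommGroup M] [Module R M]
    [AddCommGroup N] [Module R N] (i : ℕ) : Prop :=
  Subsingleton (((Ext R (ModuleCat R) i).obj (Opposite.op (ModuleCat.of R M))).obj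
    (ModuleCat.of R N))

/-- `pd_R M < n`, expressed by the standard characterization
`Ext_R^i(M, -) = 0` for all `i ≥ n`. -/
def ProjDimLT (M : Type) [AddCommGroup M] [Module R M] (n : ℕ) : Prop :=
  ∀ (N : ModuleCat R) (i : ℕ), n ≤ i → ExtVanish R M N i

/-- `pd_R M < ∞`. -/
def ProjDimFinite (M : Type) [AddCommGroup M] [Module R M] : Prop :=
  ∃ n, ProjDimLT R M n

/-- `id_R M < n`, expressed by the standard characterization
`Ext_R^i(-, M) = 0` for all `i ≥ n`. -/
def InjDimLT (M : Type) [AddCommGroup M] [Module R M] (n : ℕ) : Prop :=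
  ∀ (N : ModuleCat R) (i : ℕ), n ≤ i → ExtVanish R N M i

/-- `id_R M < ∞`. -/
def InjDimFinite (M : Type) [AddCommGroup M] [Module R M] : Prop :=
  ∃ n, InjDimLT R M n

/-- `M` is a Tor-rigid `R`-module. -/
def TorRigid (M : Type) [AddCommGroup M] [Module R M] : Prop :=
  ∀ (N : ModuleCat R), Module.Finite R N → ∀ n : ℕ, 1 ≤ n → TorVanish R M N n →
    ∀ i : ℕ, n ≤ i → TorVanish R M N i

variable [IsLocalRing R]

/-- The depth of `M`: the supremum of lengths of `M`-regular sequences contained in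
the maximal ideal. -/
noncomputable def depth (M : Type) [AddCommGroup M] [Module R M] : ℕ∞ :=
  sSup {n : ℕ∞ | ∃ rs : List R, (∀ x ∈ rs, x ∈ maximalIdeal R) ∧
    RingTheory.Sequence.IsRegular M rs ∧ (rs.length : ℕ∞) = n}

/-- The dimension of a module, i.e. the Krull dimension of `R ⧸ ann M`. -/
noncomputable def moduleDim (M : Type) [AddCommGroup M] [Module R M] : WithBot ℕ∞ :=
  ringKrullDim (R ⧸ Module.annihilator R M)

/-- `M` is an Ulrich `R`-module of dimension `s` : `M` is nonzero, Cohen–Macaulay of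
dimension `s`, and there is an `M`-regular sequence `x₁, …, x_s` in the maximal ideal
with `mM = (x₁, …, x_s)M`. -/
def IsUlrich (M : Type) [AddCommGroup M] [Module R M] (s : ℕ) : Prop :=
  Nontrivial M ∧ moduleDim R M = (s : ℕ∞) ∧ depth R M = (s : ℕ∞) ∧
  ∃ rs : List R, rs.length = s ∧ (∀ x ∈ rs, x ∈ maximalIdeal R) ∧
    RingTheory.Sequence.IsRegular M rs ∧
    (maximalIdeal R) • (⊤ : Submodule R M) = (Ideal.ofList rs) • ⊤

/-- `R` is a regular local ring: the maximal ideal is generated by `dim R` elements. -/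
def IsRegularLocal : Prop :=
  ∃ s : Finset R, Ideal.span (s : Set R) = maximalIdeal R ∧
    (s.card : WithBot ℕ∞) = ringKrullDim R

/-- `R` (of dimension `d`) has minimal multiplicity: there is an `R`-regular sequence
`x₁, …, x_d` in the maximal ideal `m` with `m² = (x₁, …, x_d)m`. -/
def HasMinimalMultiplicity (d : ℕ) : Prop :=
  ∃ rs : List R, rs.length = d ∧ (∀ x ∈ rs, x ∈ maximalIdeal R) ∧
    RingTheory.Sequence.IsWeaklyRegular R rs ∧
    maximalIdeal R ^ 2 = Ideal.ofList rs * maximalIdeal R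

/-- The `n`-th Betti number of `M` over the local ring `R`, i.e. the dimension over the
residue field `k = R ⧸ m` of `Tor_n^R(M, k)` (which is an `m`-torsion module, so we take
the dimension of its reduction mod `m`). -/
noncomputable def betti (M : Type) [AddCommGroup M] [Module R M] (n : ℕ) : ℕ :=
  Module.finrank (R ⧸ maximalIdeal R)
    ((((Tor (ModuleCat R) n).obj (ModuleCat.of R M)).obj
        (ModuleCat.of R (R ⧸ maximalIdeal R))) ⧸
      (maximalIdeal R • (⊤ : Submodule R
        (((Tor (ModuleCat R) n).obj (ModuleCat.of R M)).obj
          (ModuleCat.of R (R ⧸ maximalIdeal R))))))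

end Prelim

section PartA
universe u
variable {R : Type} [CommRing R]

noncomputable def mkRes (C : ChainComplex (ModuleCat.{0} R) ℕ) (Z : ModuleCat.{0} R)
    (ε : C.X 0 ⟶ Z) (w : C.d 1 0 ≫ ε = 0) (hp : ∀ n, Projective (C.X n))
    (hex : ∀ n, Function.Exact (C.d (n+2) (n+1)) (C.d (n+1) n))
    (h0 : Function.Exact (C.d 1 0) ε) (hs : Function.Surjective ε) : ProjectiveResolution Z where
  complex := C
  projective := hp
  π := (ChainComplex.toSingle₀Equiv _ _).symm ⟨ε, w⟩
  quasiIso := ⟨fun n => by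
    cases n
    · rw [ChainComplex.quasiIsoAt₀_iff, ShortComplex.quasiIso_iff_of_zeros']
      · refine (ShortComplex.exact_and_epi_g_iff_of_iso (S₂ := ShortComplex.mk _ _ w) ?_).2
          ⟨?_, ?_⟩
        · refine ShortComplex.isoMk (Iso.refl _) (Iso.refl _) (Iso.refl _) ?_ ?_
          · exact (Category.id_comp _).trans (Category.comp_id _).symm
          · refine (Category.id_comp _).trans (Eq.trans ?_ (Category.comp_id _).symm)
            simp [HomologicalComplex.shortComplexFunctor']
        · rw [ShortComplex.ShortExact.moduleCat_exact_iff_function_exact]; exact h0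
        · exact (ModuleCat.epi_iff_surjective _).2 hs
      · exact C.shape _ _ (by simp)
      · rfl
      · rfl
    · rename_i n
      rw [quasiIsoAt_iff_exactAt']
      · rw [HomologicalComplex.exactAt_iff' _ (n + 1 + 1) (n + 1) n (by simp) (by simp),
          ShortComplex.ShortExact.moduleCat_exact_iff_function_exact]
        exact hex n
      · apply ChainComplex.exactAt_succ_single_obj⟩

theorem res_exact {Z : ModuleCat.{0} R} (P : ProjectiveResolution Z) (n : ℕ) :
    Function.Exact (P.complex.d (n+2) (n+1)) (P.complex.d (n+1) n) :=
  (ShortComplex.ShortExact.moduleCat_exact_iff_function_exact _).1 (P.exact_succ n)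

/-- augmentation -/
noncomputable def resε {Z : ModuleCat.{0} R} (P : ProjectiveResolution Z) : P.complex.X 0 ⟶ Z :=
  P.π.f 0

theorem resε_w {Z : ModuleCat.{0} R} (P : ProjectiveResolution Z) :
    P.complex.d 1 0 ≫ resε P = 0 := P.complex_d_comp_π_f_zero

theorem resε_surj {Z : ModuleCat.{0} R} (P : ProjectiveResolution Z) :
    Function.Surjective (resε P) := by
  have : Epi (resε P) := inferInstanceAs (Epi (P.π.f 0))
  exact (ModuleCat.epi_iff_surjective _).1 this

theorem resε_exact {Z : ModuleCat.{0} R} (P : ProjectiveResolution Z) :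
    Function.Exact (P.complex.d 1 0) (resε P) := by
  have := ShortComplex.exact_of_g_is_cokernel (ShortComplex.mk _ _ P.complex_d_comp_π_f_zero)
    P.isColimitCokernelCofork
  exact (ShortComplex.ShortExact.moduleCat_exact_iff_function_exact _).1 this

theorem splice_aux1 {K F : ModuleCat.{0} R} (i : K ⟶ F)
    (hi : Function.Injective i)
    (Q : ProjectiveResolution K) : Function.Exact (Q.complex.d 1 0) (resε Q ≫ i) := by
  intro a
  change i (resε Q a) = 0 ↔ a ∈ Set.range (Q.complex.d 1 0)
  rw [← resε_exact Q a]
  constructor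
  · intro h; apply hi; rw [h, map_zero]
  · intro h; rw [h, map_zero]

theorem splice_aux2 {K F Z : ModuleCat.{0} R} (i : K ⟶ F) (p : F ⟶ Z)
    (he : Function.Exact i p)
    (Q : ProjectiveResolution K) : Function.Exact (resε Q ≫ i) p := by
  intro a
  rw [he a]
  constructor
  · rintro ⟨b, rfl⟩
    obtain ⟨c, rfl⟩ := resε_surj Q b
    exact ⟨c, rfl⟩
  · rintro ⟨c, rfl⟩
    exact ⟨resε Q c, rfl⟩

noncomputable def splice {K F Z : ModuleCat.{0} R} (i : K ⟶ F) (p : F ⟶ Z) (hF : Projective F)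
    (hi : Function.Injective i) (he : Function.Exact i p) (hp : Function.Surjective p)
    (Q : ProjectiveResolution K) : ProjectiveResolution Z :=
  mkRes (ChainComplex.augment Q.complex (resε Q ≫ i)
      (by rw [← Category.assoc, resε_w, Limits.zero_comp])) Z p
    (by
      ext a
      change p (i (resε Q a)) = 0
      exact he.apply_apply_eq_zero _)
    (by rintro (_ | n)
        · exact hF
        · exact Q.projective n)
    (by rintro (_ | n)
        · exact splice_aux1 i hi Q
        · exact res_exact Q n)
    (splice_aux2 i p he Q)
    hp

/-- Tor computed with a resolution -/
noncomputable def torIso (M : ModuleCat.{0} R) {Z : ModuleCat.{0} R} (P : ProjectiveResolution Z) (n : ℕ) :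
    ((Tor (ModuleCat R) n).obj M).obj Z ≅
    ((((MonoidalCategory.tensoringLeft (ModuleCat R)).obj M).mapHomologicalComplex _).obj
      P.complex).homology n :=
  P.isoLeftDerivedObj _ n

noncomputable def shiftAux (M : ModuleCat.{0} R) {K F Z : ModuleCat.{0} R} (i : K ⟶ F) (p : F ⟶ Z)
    (hF : Projective F)
    (hi : Function.Injective i) (he : Function.Exact i p) (hp : Function.Surjective p)
    (Q : ProjectiveResolution K) (n : ℕ) :
    ((((MonoidalCategory.tensoringLeft (ModuleCat R)).obj M).mapHomologicalComplex
      (ComplexShape.down ℕ)).obj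
      (splice i p hF hi he hp Q).complex).sc' (n+3) (n+2) (n+1) ≅
    ((((MonoidalCategory.tensoringLeft (ModuleCat R)).obj M).mapHomologicalComplex
      (ComplexShape.down ℕ)).obj Q.complex).sc' (n+2) (n+1) n :=
  Iso.refl (((((MonoidalCategory.tensoringLeft (ModuleCat R)).obj M).mapHomologicalComplex
      (ComplexShape.down ℕ)).obj Q.complex).sc' (n+2) (n+1) n)

noncomputable def shiftIso (M : ModuleCat.{0} R) {K F Z : ModuleCat.{0} R} (i : K ⟶ F) (p : F ⟶ Z)
    (hF : Projective F)
    (hi : Function.Injective i) (he : Function.Exact i p) (hp : Function.Surjective p) (n : ℕ) :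
    ((Tor (ModuleCat R) (n+2)).obj M).obj Z ≅ ((Tor (ModuleCat R) (n+1)).obj M).obj K :=
  torIso M (splice i p hF hi he hp (ProjectiveResolution.of K)) (n+2) ≪≫
   ShortComplex.homologyMapIso (
     (HomologicalComplex.isoSc' _ (n+3) (n+2) (n+1) (ChainComplex.prev _ _)
       (ChainComplex.next_nat_succ _)) ≪≫
     shiftAux M i p hF hi he hp (ProjectiveResolution.of K) n ≪≫
     (HomologicalComplex.isoSc' _ (n+2) (n+1) n (ChainComplex.prev _ _)
       (ChainComplex.next_nat_succ _)).symm) ≪≫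
   (torIso M (ProjectiveResolution.of K) (n+1)).symm

theorem exists_res_finite [IsNoetherianRing R] (n : ℕ) : ∀ (Z : ModuleCat.{0} R) [Module.Finite R Z],
    ∃ P : ProjectiveResolution Z, Module.Finite R (P.complex.X n) := by
  induction n with
  | zero =>
    intro Z _
    obtain ⟨m, f, hf⟩ := Module.Finite.exists_fin' R Z
    refine ⟨splice (K := ModuleCat.of R (LinearMap.ker f)) (F := ModuleCat.of R (Fin m → R))
      (ModuleCat.ofHom (LinearMap.ker f).subtype) (ModuleCat.ofHom f)
      ((IsProjective.iff_projective _).1 inferInstance) Subtype.val_injective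
      (LinearMap.exact_subtype_ker_map f) hf (ProjectiveResolution.of _), ?_⟩
    exact inferInstanceAs (Module.Finite R (Fin m → R))
  | succ n ih =>
    intro Z _
    obtain ⟨m, f, hf⟩ := Module.Finite.exists_fin' R Z
    obtain ⟨Q, hQ⟩ := ih (ModuleCat.of R (LinearMap.ker f))
    refine ⟨splice (K := ModuleCat.of R (LinearMap.ker f)) (F := ModuleCat.of R (Fin m → R))
      (ModuleCat.ofHom (LinearMap.ker f).subtype) (ModuleCat.ofHom f)
      ((IsProjective.iff_projective _).1 inferInstance) Subtype.val_injective
      (LinearMap.exact_subtype_ker_map f) hf Q, ?_⟩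
    exact hQ

theorem tor_finite [IsNoetherianRing R] (M Z : ModuleCat.{0} R) [Module.Finite R M]
    [Module.Finite R Z] (n : ℕ) :
    Module.Finite R (((Tor (ModuleCat R) n).obj M).obj Z) := by
  obtain ⟨P, hP⟩ := exists_res_finite n Z
  let C := (((MonoidalCategory.tensoringLeft (ModuleCat R)).obj M).mapHomologicalComplex
    (ComplexShape.down ℕ)).obj P.complex
  have h1 : Module.Finite R (C.X n) :=
    inferInstanceAs (Module.Finite R (TensorProduct R M (P.complex.X n)))
  have h2 : Module.Finite R (C.cycles n) :=
    Module.Finite.of_injective (C.iCycles n).hom ((ModuleCat.mono_iff_injective _).1 inferInstance)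
  have h3 : Module.Finite R (C.homology n) :=
    Module.Finite.of_surjective (C.homologyπ n).hom ((ModuleCat.epi_iff_surjective _).1 inferInstance)
  exact Module.Finite.equiv (torIso M P n).toLinearEquiv.symm
end PartA

section PartB
open TensorProduct
variable {R : Type} [CommRing R]

/-- base change functor -/
noncomputable def bc (R S : Type) [CommRing R] [CommRing S] [Algebra R S] :
    ModuleCat.{0} R ⥤ ModuleCat.{0} S where
  obj N := ModuleCat.of S (S ⊗[R] N)
  map g := ModuleCat.ofHom (LinearMap.baseChange S g.hom)
  map_id N := by ext; simp
  map_comp f g := by ext; simp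

instance (R S : Type) [CommRing R] [CommRing S] [Algebra R S] : (bc R S).Additive where
  map_add {X Y f g} := by
    apply ModuleCat.hom_ext
    exact LinearMap.baseChange_add _ _

theorem bc_projective (R S : Type) [CommRing R] [CommRing S] [Algebra R S] (N : ModuleCat.{0} R)
    (h : Projective N) : Projective ((bc R S).obj N) := by
  have : Module.Projective R N := (IsProjective.iff_projective _).2 h
  exact (IsProjective.iff_projective (R := S) (S ⊗[R] N)).1 inferInstance

noncomputable def bcι (R S : Type) [CommRing R] [CommRing S] [Algebra R S] (N : ModuleCat.{0} R) :
    N →+ (bc R S).obj N := (TensorProduct.mk R S N 1).toAddMonoidHom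

theorem bc_map (R S : Type) [CommRing R] [CommRing S] [Algebra R S] {N N' : ModuleCat.{0} R}
    (g : N ⟶ N') (a : N) :
    (bc R S).map g (bcι R S N a) = bcι R S N' (g a) := by
  exact LinearMap.baseChange_tmul _ _ _

theorem bcι_surj (x : R) (N : ModuleCat.{0} R) (b : (bc R (R ⧸ Ideal.span {x})).obj N) :
    ∃ a, bcι R (R ⧸ Ideal.span {x}) N a = b :=
  TensorProduct.mk_surjective R N (R ⧸ Ideal.span {x}) Ideal.Quotient.mk_surjective b

theorem bcι_eq_zero (x : R) (N : ModuleCat.{0} R) (a : N) :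
    bcι R (R ⧸ Ideal.span {x}) N a = 0 ↔ ∃ b, a = x • b := by
  refine Iff.trans (TensorProduct.quotTensorEquivQuotSMul N (Ideal.span {x})).map_eq_zero_iff.symm ?_
  have : (TensorProduct.quotTensorEquivQuotSMul N (Ideal.span {x}))
    (bcι R (R ⧸ Ideal.span {x}) N a) = Submodule.Quotient.mk a := by
    have := TensorProduct.quotTensorEquivQuotSMul_mk_tmul (Ideal.span {x}) 1 a
    rw [one_smul] at this
    exact this
  rw [this, Submodule.Quotient.mk_eq_zero, Submodule.ideal_span_singleton_smul,
    Submodule.mem_smul_pointwise_iff_exists]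
  constructor
  · rintro ⟨b, -, rfl⟩; exact ⟨b, rfl⟩
  · rintro ⟨b, rfl⟩; exact ⟨b, trivial, rfl⟩

theorem bc_exact (x : R) {A B C D : ModuleCat.{0} R} (f : A ⟶ B) (g : B ⟶ C) (h : C ⟶ D)
    (_w : f ≫ g = 0) (h1 : Function.Exact f g) (h2 : Function.Exact g h) (hx : ∀ d : D, x • d = 0 → d = 0) :
    Function.Exact ((bc R (R ⧸ Ideal.span {x})).map f) ((bc R (R ⧸ Ideal.span {x})).map g) := by
  intro b
  constructor
  · obtain ⟨b, rfl⟩ := bcι_surj x B b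
    intro hb
    rw [bc_map, bcι_eq_zero] at hb
    obtain ⟨c, hc⟩ := hb
    have h3 : h c = 0 := hx _ (by rw [← map_smul, ← hc]; exact h2.apply_apply_eq_zero _)
    obtain ⟨b', rfl⟩ := (h2 c).1 h3
    have h4 : g (b - x • b') = 0 := by rw [map_sub, map_smul, hc, sub_self]
    obtain ⟨a, ha⟩ := (h1 _).1 h4
    refine ⟨bcι R _ A a, ?_⟩
    rw [bc_map, ha, map_sub, (bcι_eq_zero x B (x • b')).2 ⟨b', rfl⟩, sub_zero]
  · rintro ⟨a, rfl⟩
    obtain ⟨a, rfl⟩ := bcι_surj x A a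
    rw [bc_map, bc_map, h1.apply_apply_eq_zero, map_zero]

theorem bc_surj (x : R) {A B : ModuleCat.{0} R} (f : A ⟶ B) (h : Function.Surjective f) :
    Function.Surjective ((bc R (R ⧸ Ideal.span {x})).map f) := by
  intro b
  obtain ⟨b, rfl⟩ := bcι_surj x B b
  obtain ⟨a, rfl⟩ := h b
  exact ⟨bcι R _ A a, bc_map _ _ _ _⟩

theorem bc_exact0 (x : R) {A B C : ModuleCat.{0} R} (f : A ⟶ B) (g : B ⟶ C)
    (_w : f ≫ g = 0) (h1 : Function.Exact f g) (h2 : Function.Surjective g) :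
    Function.Exact ((bc R (R ⧸ Ideal.span {x})).map f) ((bc R (R ⧸ Ideal.span {x})).map g) :=
  bc_exact x f g (0 : C ⟶ ModuleCat.of R PUnit) _w h1
    (by intro c; simpa using h2 c) (by intro d _; rfl)

theorem reg_of_projective (x : R) (hx : IsSMulRegular R x) (N : ModuleCat.{0} R) (h : Projective N) :
    ∀ a : N, x • a = 0 → a = 0 := by
  have : Module.Projective R N := (IsProjective.iff_projective _).2 h
  obtain ⟨s, hs⟩ := Module.projective_def'.1 this
  intro a ha
  have h1 : s a = 0 := by
    ext i
    apply hx
    have : x • s a = 0 := by rw [← map_smul, ha, map_zero]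
    simpa using DFunLike.congr_fun this i
  have h2 := LinearMap.congr_fun hs a
  simpa [h1] using h2.symm

noncomputable def bcRes (x : R) (hx : IsSMulRegular R x) {Z : ModuleCat.{0} R}
    (hZ : ∀ a : Z, x • a = 0 → a = 0) (P : ProjectiveResolution Z) :
    ProjectiveResolution ((bc R (R ⧸ Ideal.span {x})).obj Z) :=
  mkRes (((bc R (R ⧸ Ideal.span {x})).mapHomologicalComplex _).obj P.complex) _
    ((bc R (R ⧸ Ideal.span {x})).map (resε P))
    (by
      refine Eq.trans ((bc R (R ⧸ Ideal.span {x})).map_comp _ _).symm ?_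
      rw [resε_w, Functor.map_zero]; rfl)
    (fun n => bc_projective R _ _ (P.projective n))
    (by
      rintro (_ | n)
      · exact bc_exact x _ _ _ (P.complex.d_comp_d _ _ _) (res_exact P 0) (resε_exact P) hZ
      · exact bc_exact x _ _ _ (P.complex.d_comp_d _ _ _) (res_exact P (n+1)) (res_exact P n)
          (reg_of_projective x hx _ (P.projective n)))
    (bc_exact0 x _ _ (resε_w P) (resε_exact P) (resε_surj P))
    (bc_surj x _ (resε_surj P))

theorem bcCancel_smul (S : Type) [CommRing S] [Algebra R S] (M : Type) [AddCommGroup M]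
    [Module R M] [Module S M] [IsScalarTower R S M] (N : Type) [AddCommGroup N]
    [Module R N] (r : R) (a : M ⊗[R] N) :
    (TensorProduct.AlgebraTensorModule.cancelBaseChange R S S M N).symm (r • a) =
    algebraMap R S r • ((TensorProduct.AlgebraTensorModule.cancelBaseChange R S S M N).symm a) := by
  rw [← map_smul, algebraMap_smul]

noncomputable def bcCancelEquiv (S : Type) [CommRing S] [Algebra R S] (M : Type) [AddCommGroup M]
    [Module R M] [Module S M] [IsScalarTower R S M] (N : ModuleCat.{0} R) :
    ((MonoidalCategory.tensoringLeft (ModuleCat R)).obj (ModuleCat.of R M)).obj N ≃ₗ[R]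
    (bc R S ⋙ (MonoidalCategory.tensoringLeft (ModuleCat S)).obj (ModuleCat.of S M) ⋙
     ModuleCat.restrictScalars (algebraMap R S)).obj N :=
  { toFun := fun a => (TensorProduct.AlgebraTensorModule.cancelBaseChange R S S M N).symm a
    map_add' := fun a b => map_add (TensorProduct.AlgebraTensorModule.cancelBaseChange R S S M N).symm a b
    map_smul' := fun r a => by
      exact bcCancel_smul S M N r a
    invFun := fun a => (TensorProduct.AlgebraTensorModule.cancelBaseChange R S S M N) a
    left_inv := fun a => LinearEquiv.apply_symm_apply
      (TensorProduct.AlgebraTensorModule.cancelBaseChange R S S M N) a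
    right_inv := fun a => LinearEquiv.symm_apply_apply
      (TensorProduct.AlgebraTensorModule.cancelBaseChange R S S M N) a }

theorem bcCancel_nat (S : Type) [CommRing S] [Algebra R S] (M : Type) [AddCommGroup M]
    [Module R M] [Module S M] [IsScalarTower R S M] (N N' : Type) [AddCommGroup N] [AddCommGroup N']
    [Module R N] [Module R N'] (g : N →ₗ[R] N') (a : M ⊗[R] N) :
    (TensorProduct.AlgebraTensorModule.cancelBaseChange R S S M N').symm (g.lTensor M a) =
    (g.baseChange S).lTensor M
      ((TensorProduct.AlgebraTensorModule.cancelBaseChange R S S M N).symm a) := by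
  induction a with
  | zero => simp
  | add a b ha hb => simp only [map_add, ha, hb]
  | tmul m n => simp

noncomputable def bcCancelIso (S : Type) [CommRing S] [Algebra R S] (M : Type) [AddCommGroup M]
    [Module R M] [Module S M] [IsScalarTower R S M] :
    (MonoidalCategory.tensoringLeft (ModuleCat R)).obj (ModuleCat.of R M) ≅
    bc R S ⋙ (MonoidalCategory.tensoringLeft (ModuleCat S)).obj (ModuleCat.of S M) ⋙
     ModuleCat.restrictScalars (algebraMap R S) :=
  NatIso.ofComponents (fun N => LinearEquiv.toModuleIso (bcCancelEquiv S M N)) (by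
    intro N N' g
    apply ModuleCat.hom_ext
    apply LinearMap.ext
    intro a
    exact bcCancel_nat S M N N' g.hom a)

noncomputable def bcTorIso (x : R) (hx : IsSMulRegular R x) (Z : ModuleCat.{0} R)
    (hZ : ∀ a : Z, x • a = 0 → a = 0) (M : Type) [AddCommGroup M]
   [Module R M] [Module (R ⧸ Ideal.span {x}) M] [IsScalarTower R (R ⧸ Ideal.span {x}) M] (n : ℕ) :
   ((Tor (ModuleCat R) n).obj (ModuleCat.of R M)).obj Z ≅
    (ModuleCat.restrictScalars (algebraMap R (R ⧸ Ideal.span {x}))).obj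
    (((Tor (ModuleCat (R ⧸ Ideal.span {x})) n).obj (ModuleCat.of _ M)).obj
      ((bc R (R ⧸ Ideal.span {x})).obj Z)) := by
  let S := (R ⧸ Ideal.span {x})
  let P := ProjectiveResolution.of Z
  let F := (MonoidalCategory.tensoringLeft (ModuleCat R)).obj (ModuleCat.of R M)
  let F' := (MonoidalCategory.tensoringLeft (ModuleCat S)).obj (ModuleCat.of S M)
  let res := ModuleCat.restrictScalars (algebraMap R S)
  let C' := (F'.mapHomologicalComplex (ComplexShape.down ℕ)).obj (bcRes x hx hZ P).complex
  have e1 : (F.mapHomologicalComplex (ComplexShape.down ℕ)).obj P.complex ≅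
      (res.mapHomologicalComplex _).obj C' :=
    (NatIso.mapHomologicalComplex (bcCancelIso S M) _).app P.complex
  refine torIso _ P n ≪≫ (HomologicalComplex.homologyFunctor _ _ n).mapIso e1 ≪≫ ?_ ≪≫
    res.mapIso (torIso _ (bcRes x hx hZ P) n).symm
  exact (C'.sc n).mapHomologyIso res
end PartB

section PartC
open TensorProduct

noncomputable def bdim (R : Type) [CommRing R] [IsLocalRing R] (T : Type) [AddCommGroup T] [Module R T] : ℕ :=
  Module.finrank (R ⧸ maximalIdeal R) (T ⧸ (maximalIdeal R • (⊤ : Submodule R T)))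

theorem bdim_semi {R S : Type} [CommRing R] [CommRing S] [IsLocalRing R] [IsLocalRing S] [Algebra R S]
    (hs : Function.Surjective (algebraMap R S)) {T T' : Type} [AddCommGroup T] [AddCommGroup T']
    [Module R T] [Module R T'] [Module S T'] [IsScalarTower R S T'] (e : T ≃ₗ[R] T') :
    bdim R T = bdim S T' := by
  have hc : (maximalIdeal S).comap (algebraMap R S) = maximalIdeal R := by
    have := Ideal.comap_isMaximal_of_surjective (algebraMap R S) hs (K := maximalIdeal S)
    exact IsLocalRing.eq_maximalIdeal this
  have hm : (maximalIdeal R).map (algebraMap R S) = maximalIdeal S := by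
    rw [← hc, Ideal.map_comap_of_surjective _ hs]
  let i : R ⧸ maximalIdeal R →+* S ⧸ maximalIdeal S := Ideal.quotientMap _ (algebraMap R S) hc.ge
  have hi : Function.Bijective i :=
    ⟨Ideal.quotientMap_injective' hc.le, Ideal.quotientMap_surjective hs⟩
  have h1 : (maximalIdeal R • (⊤ : Submodule R T)).map (e : T →ₗ[R] T') =
      (maximalIdeal S • (⊤ : Submodule S T')).restrictScalars R := by
    rw [Submodule.map_smul'', Submodule.map_top, LinearEquiv.range, ← hm, Ideal.smul_restrictScalars,
      Submodule.restrictScalars_top]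
  let j := (Submodule.Quotient.equiv _ _ e h1).trans
    (Submodule.Quotient.restrictScalarsEquiv R (maximalIdeal S • (⊤ : Submodule S T')))
  have := rank_eq_of_equiv_equiv i j.toAddEquiv hi (by
    intro r t
    obtain ⟨r, rfl⟩ := Ideal.Quotient.mk_surjective r
    obtain ⟨t, rfl⟩ := Submodule.Quotient.mk_surjective _ t
    have e1 : i (Ideal.Quotient.mk _ r) = Ideal.Quotient.mk _ (algebraMap R S r) :=
      Ideal.quotientMap_mk
    rw [e1]
    change Submodule.Quotient.mk (e (r • t)) = Submodule.Quotient.mk (algebraMap R S r • e t)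
    rw [map_smul, algebraMap_smul])
  exact congrArg Cardinal.toNat this

theorem bdim_congr {R : Type} [CommRing R] [IsLocalRing R] {T T' : Type} [AddCommGroup T] [AddCommGroup T']
    [Module R T] [Module R T'] (e : T ≃ₗ[R] T') : bdim R T = bdim R T' :=
  bdim_semi (S := R) Function.surjective_id e

theorem bdim_prod {R : Type} [CommRing R] [IsLocalRing R] {A B : Type} [AddCommGroup A] [AddCommGroup B]
    [Module R A] [Module R B] [Module.Finite R A] [Module.Finite R B] :
    bdim R (A × B) = bdim R A + bdim R B := by
  let l : (A × B) →ₗ[R] (A ⧸ (maximalIdeal R • (⊤ : Submodule R A))) ×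
      (B ⧸ (maximalIdeal R • (⊤ : Submodule R B))) :=
    LinearMap.prodMap (Submodule.mkQ _) (Submodule.mkQ _)
  have hl : Function.Surjective l := by
    apply Function.Surjective.prodMap <;> exact Submodule.mkQ_surjective _
  have hk : LinearMap.ker l = maximalIdeal R • (⊤ : Submodule R (A × B)) := by
    apply le_antisymm
    · rintro ⟨a, b⟩ h
      have h' : a ∈ maximalIdeal R • (⊤ : Submodule R A) ∧ b ∈ maximalIdeal R • (⊤ : Submodule R B) := by
        simpa [l] using h
      have e1 : (a, b) = LinearMap.inl R A B a + LinearMap.inr R A B b := by simp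
      rw [e1]
      apply Submodule.add_mem
      · have := Submodule.mem_map_of_mem (f := LinearMap.inl R A B) h'.1
        rw [Submodule.map_smul''] at this
        exact Submodule.smul_mono le_rfl le_top this
      · have := Submodule.mem_map_of_mem (f := LinearMap.inr R A B) h'.2
        rw [Submodule.map_smul''] at this
        exact Submodule.smul_mono le_rfl le_top this
    · rw [Submodule.smul_le]
      rintro r hr ⟨a, b⟩ -
      have h1 : r • a ∈ maximalIdeal R • (⊤ : Submodule R A) := Submodule.smul_mem_smul hr trivial
      have h2 : r • b ∈ maximalIdeal R • (⊤ : Submodule R B) := Submodule.smul_mem_smul hr trivial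
      simpa [l] using! ⟨h1, h2⟩
  let j := (Submodule.quotEquivOfEq _ _ hk.symm).trans (l.quotKerEquivOfSurjective hl)
  have := rank_eq_of_equiv_equiv (R := R ⧸ maximalIdeal R) (id) j.toAddEquiv Function.bijective_id (by
    intro r t
    obtain ⟨r, rfl⟩ := Ideal.Quotient.mk_surjective r
    exact j.map_smul r t)
  have h2 := congrArg Cardinal.toNat this
  letI : Field (R ⧸ maximalIdeal R) := Ideal.Quotient.field _
  have : Module.Finite (R ⧸ maximalIdeal R) (A ⧸ (maximalIdeal R • (⊤ : Submodule R A))) :=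
    Module.Finite.of_restrictScalars_finite R _ _
  have : Module.Finite (R ⧸ maximalIdeal R) (B ⧸ (maximalIdeal R • (⊤ : Submodule R B))) :=
    Module.Finite.of_restrictScalars_finite R _ _
  exact h2.trans Module.finrank_prod

theorem exists_functional {R : Type} [CommRing R] [IsLocalRing R] (x : R) (hx : x ∈ maximalIdeal R)
    (hx2 : x ∉ maximalIdeal R ^ 2) :
    ∃ φ : maximalIdeal R →ₗ[R] R ⧸ maximalIdeal R, φ ⟨x, hx⟩ = 1 := by
  have h : (maximalIdeal R).toCotangent ⟨x, hx⟩ ≠ 0 := by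
    rw [Ne, Ideal.toCotangent_eq_zero]; exact hx2
  obtain ⟨f, hf⟩ := Module.Projective.exists_dual_eq_one (ResidueField R)
    (V := CotangentSpace R) h
  exact ⟨(f.restrictScalars R).comp (maximalIdeal R).toCotangent, hf⟩

theorem decomp {R : Type} [CommRing R] [IsLocalRing R] (x : R) (hx : x ∈ maximalIdeal R)
    (hx2 : x ∉ maximalIdeal R ^ 2) [IsLocalRing (R ⧸ Ideal.span {x})] :
    Nonempty ((bc R (R ⧸ Ideal.span {x})).obj (ModuleCat.of R (maximalIdeal R)) ≃ₗ[R ⧸ Ideal.span {x}]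
      ((R ⧸ Ideal.span {x}) ⧸ maximalIdeal (R ⧸ Ideal.span {x})) ×
        maximalIdeal (R ⧸ Ideal.span {x})) := by
  set S := R ⧸ Ideal.span {x} with hS
  have hs : Function.Surjective (algebraMap R S) := Ideal.Quotient.mk_surjective
  have hc : (maximalIdeal S).comap (algebraMap R S) = maximalIdeal R := by
    have := Ideal.comap_isMaximal_of_surjective (algebraMap R S) hs (K := maximalIdeal S)
    exact IsLocalRing.eq_maximalIdeal this
  obtain ⟨φ, hφ⟩ := exists_functional x hx hx2
  have hker : ∀ r : R, algebraMap R (S ⧸ maximalIdeal S) r = 0 ↔ r ∈ maximalIdeal R := by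
    intro r
    rw [← hc, Ideal.mem_comap, ← Ideal.Quotient.eq_zero_iff_mem]
    rfl
  let u : (R ⧸ maximalIdeal R) →ₗ[R] S ⧸ maximalIdeal S :=
    Submodule.liftQ _ (Algebra.linearMap R (S ⧸ maximalIdeal S)) (by
      intro r hr
      exact (hker r).2 hr)
  let φ' : maximalIdeal R →ₗ[R] S ⧸ maximalIdeal S := u.comp φ
  have hφ' : φ' ⟨x, hx⟩ = 1 := by
    change u (φ ⟨x, hx⟩) = 1
    rw [hφ]
    change algebraMap R (S ⧸ maximalIdeal S) 1 = 1
    exact map_one _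
  let ψ : maximalIdeal R →ₗ[R] maximalIdeal S :=
    { toFun := fun a => ⟨algebraMap R S a, hc.ge a.2⟩
      map_add' := fun a b => Subtype.ext (map_add (algebraMap R S) _ _)
      map_smul' := fun r a => Subtype.ext (by
        change algebraMap R S (r * a) = r • algebraMap R S a
        rw [map_mul, Algebra.smul_def]) }
  let Φ : S ⊗[R] (maximalIdeal R) →ₗ[S] (S ⧸ maximalIdeal S) × maximalIdeal S :=
    (LinearMap.liftBaseChange S φ').prod (LinearMap.liftBaseChange S ψ)
  have hΦ : ∀ a : maximalIdeal R, Φ (bcι R S (ModuleCat.of R (maximalIdeal R)) a) = (φ' a, ψ a) := by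
    intro a
    change (LinearMap.liftBaseChange S φ' (1 ⊗ₜ a), LinearMap.liftBaseChange S ψ (1 ⊗ₜ a)) = _
    rw [LinearMap.liftBaseChange_tmul, LinearMap.liftBaseChange_tmul, one_smul, one_smul]
  refine ⟨LinearEquiv.ofBijective Φ ⟨?_, ?_⟩⟩
  · rw [← LinearMap.ker_eq_bot, LinearMap.ker_eq_bot']
    intro b hb
    obtain ⟨a, rfl⟩ := bcι_surj x (ModuleCat.of R (maximalIdeal R)) b
    rw [hΦ, Prod.mk_eq_zero] at hb
    have h1 : algebraMap R S (a : maximalIdeal R).1 = 0 := congrArg Subtype.val hb.2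
    have h2 : (a : maximalIdeal R).1 ∈ Ideal.span {x} := Ideal.Quotient.eq_zero_iff_mem.1 h1
    obtain ⟨r, hr⟩ := Ideal.mem_span_singleton'.1 h2
    have h3 : (a : maximalIdeal R) = r • ⟨x, hx⟩ := Subtype.ext hr.symm
    have h4 := hb.1
    rw [h3, map_smul, hφ', Algebra.smul_def, mul_one, hker] at h4
    refine (bcι_eq_zero x (ModuleCat.of R (maximalIdeal R)) a).2 ⟨(⟨r, h4⟩ : maximalIdeal R), ?_⟩
    apply Subtype.ext
    change (a : maximalIdeal R).1 = x * r
    rw [← hr, mul_comm]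
  · rintro ⟨c, d, hd⟩
    obtain ⟨b, rfl⟩ := hs d
    have hb : b ∈ maximalIdeal R := by rw [← hc]; exact hd
    obtain ⟨s, hs'⟩ := Ideal.Quotient.mk_surjective (c - φ' ⟨b, hb⟩)
    obtain ⟨r, rfl⟩ := hs s
    refine ⟨bcι R S (ModuleCat.of R (maximalIdeal R))
      ((⟨b, hb⟩ + r • ⟨x, hx⟩ : maximalIdeal R)), ?_⟩
    rw [hΦ]
    apply Prod.ext
    · change φ' _ = c
      rw [map_add, map_smul, hφ', Algebra.smul_def, mul_one]
      have : algebraMap R (S ⧸ maximalIdeal S) r = c - φ' ⟨b, hb⟩ := hs'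
      rw [this]; abel
    · apply Subtype.ext
      change algebraMap R S (b + r * x) = algebraMap R S b
      rw [map_add, map_mul]
      have : algebraMap R S x = 0 := Ideal.Quotient.eq_zero_iff_mem.2 (Ideal.mem_span_singleton_self x)
      rw [this, mul_zero, add_zero]

theorem leftDerived_additive {S : Type} [CommRing S] (F : ModuleCat.{0} S ⥤ ModuleCat.{0} S) [F.Additive] (n : ℕ) :
    (F.leftDerived n).Additive where
  map_add {X Y f g} := by
    let P := projectiveResolution X
    let Q := projectiveResolution Y
    rw [F.leftDerived_map_eq n f (P := P) (Q := Q) (ProjectiveResolution.lift f P Q) (ProjectiveResolution.lift_commutes f P Q),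
      F.leftDerived_map_eq n g (P := P) (Q := Q) (ProjectiveResolution.lift g P Q) (ProjectiveResolution.lift_commutes g P Q),
      F.leftDerived_map_eq n (f + g) (P := P) (Q := Q)
        (ProjectiveResolution.lift f P Q + ProjectiveResolution.lift g P Q) (by
          rw [Preadditive.add_comp, ProjectiveResolution.lift_commutes, ProjectiveResolution.lift_commutes,
            Functor.map_add, Preadditive.comp_add])]
    rw [Functor.map_add, Preadditive.add_comp, Preadditive.comp_add]

noncomputable def torProd {S : Type} [CommRing S] (M : ModuleCat.{0} S) (A B : Type) [AddCommGroup A] [AddCommGroup B]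
    [Module S A] [Module S B] (n : ℕ) :
    ((Tor (ModuleCat S) n).obj M).obj (ModuleCat.of S (A × B)) ≅
    ModuleCat.of S ((((Tor (ModuleCat S) n).obj M).obj (ModuleCat.of S A)) ×
      (((Tor (ModuleCat S) n).obj M).obj (ModuleCat.of S B))) := by
  have : ((Tor (ModuleCat S) n).obj M).Additive := by
    exact leftDerived_additive _ n
  have := Limits.preservesBinaryBiproducts_of_preservesBiproducts ((Tor (ModuleCat S) n).obj M)
  exact ((Tor (ModuleCat S) n).obj M).mapIso (ModuleCat.biprodIsoProd (ModuleCat.of S A) (ModuleCat.of S B)).symm ≪≫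
    ((Tor (ModuleCat S) n).obj M).mapBiprod _ _ ≪≫ ModuleCat.biprodIsoProd _ _

noncomputable def shiftMax {R : Type} [CommRing R] [IsLocalRing R] (M : ModuleCat.{0} R) (n : ℕ) :
    ((Tor (ModuleCat R) (n+2)).obj M).obj (ModuleCat.of R (R ⧸ maximalIdeal R)) ≅
    ((Tor (ModuleCat R) (n+1)).obj M).obj (ModuleCat.of R (maximalIdeal R)) :=
  shiftIso M (K := ModuleCat.of R (maximalIdeal R)) (F := ModuleCat.of R R)
    (ModuleCat.ofHom (maximalIdeal R).subtype) (ModuleCat.ofHom (maximalIdeal R).mkQ)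
    ((IsProjective.iff_projective _).1 inferInstance) Subtype.val_injective
    (LinearMap.exact_subtype_mkQ _) (Submodule.mkQ_surjective _) n

theorem betti_eq (R : Type) [CommRing R] [IsNoetherianRing R] [IsLocalRing R]
    (x : R) (hx : x ∈ maximalIdeal R) (hx2 : x ∉ maximalIdeal R ^ 2)
    (hxreg : IsSMulRegular R x)
    [IsLocalRing (R ⧸ Ideal.span {x})]
    (M : Type) [AddCommGroup M] [Module R M] [Module.Finite R M]
    [Module (R ⧸ Ideal.span {x}) M] [IsScalarTower R (R ⧸ Ideal.span {x}) M] (n : ℕ) :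
    betti R M (n+2) = betti (R ⧸ Ideal.span {x}) M (n+1) + betti (R ⧸ Ideal.span {x}) M (n+2) := by
  let S := R ⧸ Ideal.span {x}
  have : Module.Finite S M := Module.Finite.of_restrictScalars_finite R S M
  have hm : ∀ a : ModuleCat.of R (maximalIdeal R), x • a = 0 → a = 0 := by
    intro a ha
    apply Subtype.ext
    apply hxreg
    simpa using! congrArg Subtype.val ha
  obtain ⟨e⟩ := decomp x hx hx2
  let E1 := shiftMax (ModuleCat.of R M) n ≪≫ bcTorIso x hxreg (ModuleCat.of R (maximalIdeal R)) hm M (n+1)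
  let T' := ((Tor (ModuleCat S) (n+1)).obj (ModuleCat.of S M)).obj
    ((bc R S).obj (ModuleCat.of R (maximalIdeal R)))
  letI : Module R T' := Module.compHom T' (algebraMap R S)
  haveI : IsScalarTower R S T' := IsScalarTower.of_algebraMap_smul fun r a => rfl
  have h1 : betti R M (n+2) = bdim S T' := by
    refine bdim_semi (S := S) Ideal.Quotient.mk_surjective ?_
    exact E1.toLinearEquiv
  let k' := S ⧸ maximalIdeal S
  let A := ((Tor (ModuleCat S) (n+1)).obj (ModuleCat.of S M)).obj (ModuleCat.of S k')
  let B := ((Tor (ModuleCat S) (n+1)).obj (ModuleCat.of S M)).obj (ModuleCat.of S (maximalIdeal S))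
  have : Module.Finite S A := tor_finite _ _ _
  have : Module.Finite S B := tor_finite _ (ModuleCat.of S (maximalIdeal S)) _
  have h2 : bdim S T' = bdim S (A × B) :=
    bdim_congr (((Tor (ModuleCat S) (n+1)).obj (ModuleCat.of S M)).mapIso (LinearEquiv.toModuleIso e) ≪≫
      torProd _ _ _ _).toLinearEquiv
  have h3 : bdim S B = betti S M (n+2) := bdim_congr (shiftMax (ModuleCat.of S M) n).symm.toLinearEquiv
  rw [h1, h2, bdim_prod, h3]
  rfl
end PartC

section PartD
open Filter

theorem cplx_iff (β β' : ℕ → ℕ) (h : ∀ k, β (k+2) = β' (k+1) + β' (k+2)) (b : ℕ) :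
    (∃ α : ℝ, 0 < α ∧ ∃ N : ℕ, ∀ n : ℕ, N ≤ n →
          (β n : ℝ) ≤ α * (n : ℝ) ^ ((b : ℝ) - 1)) ↔
    (∃ α : ℝ, 0 < α ∧ ∃ N : ℕ, ∀ n : ℕ, N ≤ n →
          (β' n : ℝ) ≤ α * (n : ℝ) ^ ((b : ℝ) - 1)) := by
  constructor
  · rintro ⟨α, hα, N, hN⟩
    refine ⟨α, hα, N + 2, fun n hn => le_trans ?_ (hN n (by omega))⟩
    obtain ⟨k, rfl⟩ : ∃ k, n = k + 2 := ⟨n - 2, by omega⟩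
    rw [h k]
    exact_mod_cast Nat.le_add_left _ _
  · rintro ⟨α, hα, N, hN⟩
    refine ⟨3 * α, by positivity, N + 2, fun n hn => ?_⟩
    obtain ⟨k, rfl⟩ : ∃ k, n = k + 2 := ⟨n - 2, by omega⟩
    have h1 := hN (k+1) (by omega)
    have h2 := hN (k+2) (by omega)
    have h3 : ((k+1 : ℕ) : ℝ) ^ ((b : ℝ) - 1) ≤ 2 * ((k+2 : ℕ) : ℝ) ^ ((b : ℝ) - 1) := by
      rcases Nat.eq_zero_or_pos b with rfl | hb
      · have e : ((0 : ℕ) : ℝ) - 1 = -1 := by norm_num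
        rw [e, Real.rpow_neg_one, Real.rpow_neg_one]
        push_cast
        rw [inv_eq_one_div, ← div_eq_mul_inv, div_le_div_iff₀ (by positivity) (by positivity)]
        have : (0:ℝ) ≤ k := by positivity
        linarith
      · have hb' : (0:ℝ) ≤ (b : ℝ) - 1 := by
          have : (1 : ℝ) ≤ b := by exact_mod_cast hb
          linarith
        have h4 : ((k+1 : ℕ) : ℝ) ^ ((b : ℝ) - 1) ≤ ((k+2 : ℕ) : ℝ) ^ ((b : ℝ) - 1) :=
          Real.rpow_le_rpow (by positivity) (by push_cast; linarith) hb'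
        have h5 : 0 ≤ ((k+2 : ℕ) : ℝ) ^ ((b : ℝ) - 1) := by positivity
        linarith
    rw [h k, Nat.cast_add]
    have := mul_le_mul_of_nonneg_left h3 hα.le
    linarith

theorem rpow_inv_le_iff (m n : ℕ) (hn : n ≠ 0) (a : ℝ) (ha : 0 ≤ a) :
    (m : ℝ) ^ ((n : ℝ)⁻¹) ≤ a ↔ (m : ℝ) ≤ a ^ n := by
  rw [Real.rpow_inv_le_iff_of_pos (by positivity) ha (by positivity), Real.rpow_natCast]

theorem curv_eq (β β' : ℕ → ℕ) (h : ∀ k, β (k+2) = β' (k+1) + β' (k+2)) :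
    limsup (fun n : ℕ => (β n : ℝ) ^ ((n : ℝ)⁻¹)) atTop =
    limsup (fun n : ℕ => (β' n : ℝ) ^ ((n : ℝ)⁻¹)) atTop := by
  rw [limsup_eq, limsup_eq]
  set A := {a : ℝ | ∀ᶠ n : ℕ in atTop, (β n : ℝ) ^ ((n : ℝ)⁻¹) ≤ a} with hA
  set B := {a : ℝ | ∀ᶠ n : ℕ in atTop, (β' n : ℝ) ^ ((n : ℝ)⁻¹) ≤ a} with hB
  have hA0 : ∀ a ∈ A, 0 ≤ a := by
    intro a ha
    obtain ⟨n, hn⟩ := Eventually.exists ha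
    exact le_trans (by positivity) hn
  have hB0 : ∀ a ∈ B, 0 ≤ a := by
    intro a ha
    obtain ⟨n, hn⟩ := Eventually.exists ha
    exact le_trans (by positivity) hn
  have hAB : A ⊆ B := by
    intro a ha
    filter_upwards [ha, eventually_ge_atTop 2] with n hn h2
    refine le_trans (Real.rpow_le_rpow (by positivity) ?_ (by positivity)) hn
    obtain ⟨k, rfl⟩ : ∃ k, n = k + 2 := ⟨n - 2, by omega⟩
    rw [h k]
    exact_mod_cast Nat.le_add_left _ _
  have hBA : ∀ a ∈ B, ∀ a', a < a' → a' ∈ A := by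
    intro a ha a' haa
    have ha0 := hB0 a ha
    obtain ⟨c, hac, hca⟩ := exists_between haa
    have hc : 0 < c := lt_of_le_of_lt ha0 hac
    have h1 : 1 < a' / c := (one_lt_div hc).2 hca
    have h2 := (tendsto_pow_atTop_atTop_of_one_lt h1).eventually_ge_atTop (1 + 1 / c)
    obtain ⟨N, hN⟩ := eventually_atTop.1 (show ∀ᶠ n : ℕ in atTop, (β' n : ℝ) ^ ((n : ℝ)⁻¹) ≤ a from ha)
    change ∀ᶠ n : ℕ in atTop, (β n : ℝ) ^ ((n : ℝ)⁻¹) ≤ a'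
    filter_upwards [h2, eventually_ge_atTop (N + 2)] with n hn hnN
    obtain ⟨k, rfl⟩ : ∃ k, n = k + 2 := ⟨n - 2, by omega⟩
    rw [rpow_inv_le_iff _ _ (by omega) _ (by linarith), h k, Nat.cast_add]
    have e1 := (rpow_inv_le_iff _ _ (by omega) c hc.le).1 ((hN (k+1) (by omega)).trans hac.le)
    have e2 := (rpow_inv_le_iff _ _ (by omega) c hc.le).1 ((hN (k+2) (by omega)).trans hac.le)
    have e3 : c ^ (k+2) * (1 + 1 / c) = c ^ (k+1) + c ^ (k+2) := by
      field_simp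
      ring
    rw [div_pow, le_div_iff₀ (by positivity)] at hn
    linarith
  rcases B.eq_empty_or_nonempty with hBe | ⟨a, ha⟩
  · have hAe : A = ∅ := Set.subset_empty_iff.1 (hBe ▸ hAB)
    rw [hBe, hAe]
  · have hAne : A.Nonempty := ⟨a + 1, hBA a ha _ (by linarith)⟩
    apply le_antisymm
    · apply le_csInf ⟨a, ha⟩
      intro b hb
      apply le_of_forall_gt_imp_ge_of_dense
      intro c hc
      exact csInf_le ⟨0, hA0⟩ (hBA b hb c hc)
    · exact csInf_le_csInf ⟨0, hB0⟩ hAne hAB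
end PartD

theorem statement12 (R : Type) [CommRing R] [IsNoetherianRing R] [IsLocalRing R]
    (x : R) (hx : x ∈ maximalIdeal R) (hx2 : x ∉ maximalIdeal R ^ 2)
    (hxreg : IsSMulRegular R x)
    [IsLocalRing (R ⧸ Ideal.span {x})]
    (M : Type) [AddCommGroup M] [Module R M] [Module.Finite R M]
    [Module (R ⧸ Ideal.span {x}) M]
    (hcompat : ∀ (r : R) (a : M), (Ideal.Quotient.mk (Ideal.span {x}) r) • a = r • a)
    (hxM : ∀ a : M, x • a = 0) :
    (∀ n : ℕ, 2 ≤ n →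
      betti (R ⧸ Ideal.span {x}) M (n - 1) ≤ betti R M n ∧
      betti R M n ≤ betti (R ⧸ Ideal.span {x}) M n + betti (R ⧸ Ideal.span {x}) M (n - 1)) ∧
    (∀ b : ℕ,
      (∃ α : ℝ, 0 < α ∧ ∃ N : ℕ, ∀ n : ℕ, N ≤ n →
          (betti R M n : ℝ) ≤ α * (n : ℝ) ^ ((b : ℝ) - 1)) ↔
      (∃ α : ℝ, 0 < α ∧ ∃ N : ℕ, ∀ n : ℕ, N ≤ n →
          (betti (R ⧸ Ideal.span {x}) M n : ℝ) ≤ α * (n : ℝ) ^ ((b : ℝ) - 1))) ∧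
    Filter.limsup (fun n : ℕ => (betti R M n : ℝ) ^ ((n : ℝ)⁻¹)) Filter.atTop =
      Filter.limsup (fun n : ℕ =>
        (betti (R ⧸ Ideal.span {x}) M n : ℝ) ^ ((n : ℝ)⁻¹)) Filter.atTop := by
  haveI : IsScalarTower R (R ⧸ Ideal.span {x}) M :=
    IsScalarTower.of_algebraMap_smul fun r a => hcompat r a
  have h := betti_eq R x hx hx2 hxreg M
  refine ⟨fun n hn => ?_, cplx_iff _ _ h, curv_eq _ _ h⟩
  obtain ⟨k, rfl⟩ : ∃ k, n = k + 2 := ⟨n - 2, by omega⟩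
  have e : k + 2 - 1 = k + 1 := rfl
  rw [e, h k]
  omega
end

section
/- Let (R, m, k) be a Cohen–Macaulay commutative Noetherian local ring of dimension d with minimal multiplicity, i.e., there exists an R-regular sequence x₁, …, x_d ∈ m with m² = (x₁, …, x_d)m. Let M be a finitely generated R-module with t = depth_R M. Then M is (2d − t + 2)-Tor-rigid: for every finitely generated R-module N, if Tor_i^R(M, N) = 0 for all n ≤ i ≤ n + 2d − t + 1 for some n ≥ 1, then Tor_i^R(M, N) = 0 for all i ≥ n. In particular, every maximal Cohen–Macaulay R-module is (d+2)-Tor-rigid, and every finitely generated R-module is (2d+2)-Tor-rigid. -/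
open CategoryTheory IsLocalRing

section PartA
open scoped TensorProduct MonoidalCategory

section Found
variable {R : Type} [CommRing R]

noncomputable abbrev tcx (A : ModuleCat.{0} R) (K : ChainComplex (ModuleCat.{0} R) ℕ) :
    ChainComplex (ModuleCat.{0} R) ℕ :=
  (((MonoidalCategory.tensoringLeft (ModuleCat.{0} R)).obj A).mapHomologicalComplex _).obj K

noncomputable abbrev tcxMap {A B : ModuleCat.{0} R} (f : A ⟶ B) (K : ChainComplex (ModuleCat.{0} R) ℕ) :
    tcx A K ⟶ tcx B K :=
  (NatTrans.mapHomologicalComplex ((MonoidalCategory.tensoringLeft (ModuleCat.{0} R)).map f) _).app K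

lemma tcxMap_f {A B : ModuleCat.{0} R} (f : A ⟶ B) (K : ChainComplex (ModuleCat.{0} R) ℕ) (i : ℕ) :
    ((tcxMap f K).f i).hom = f.hom.rTensor (K.X i) := rfl

lemma tcx_d (A : ModuleCat.{0} R) (K : ChainComplex (ModuleCat.{0} R) ℕ) (i j : ℕ) :
    ((tcx A K).d i j).hom = (K.d i j).hom.lTensor A := rfl

noncomputable abbrev tS {A B C : ModuleCat.{0} R} (f : A ⟶ B) (g : B ⟶ C) (h : f ≫ g = 0)
    (K : ChainComplex (ModuleCat.{0} R) ℕ) : ShortComplex (ChainComplex (ModuleCat.{0} R) ℕ) :=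
  ShortComplex.mk (tcxMap f K) (tcxMap g K) (by
    ext i : 1
    change (tcxMap f K).f i ≫ (tcxMap g K).f i = 0
    ext : 1
    have h' : g.hom ∘ₗ f.hom = 0 := by rw [← ModuleCat.hom_comp, h]; rfl
    have h2 := LinearMap.rTensor_comp (K.X i) g.hom f.hom
    rw [h', LinearMap.rTensor_zero] at h2
    exact h2.symm)

lemma flat_of_proj (P : ModuleCat.{0} R) [Projective P] : Module.Flat R P := by
  have : Module.Projective R P := (IsProjective.iff_projective (R := R) P).2 inferInstance
  infer_instance

lemma tS_shortExact {A B C : ModuleCat.{0} R} (f : A ⟶ B) (g : B ⟶ C) (h : f ≫ g = 0)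
    (hf : Function.Injective f.hom) (hg : Function.Surjective g.hom)
    (he : Function.Exact f.hom g.hom)
    (K : ChainComplex (ModuleCat.{0} R) ℕ) [∀ i, Projective (K.X i)] : (tS f g h K).ShortExact := by
  apply HomologicalComplex.shortExact_of_degreewise_shortExact
  intro i
  have := flat_of_proj (K.X i)
  apply ModuleCat.shortComplex_shortExact
  · exact rTensor_exact (K.X i) he hg
  · exact Module.Flat.rTensor_preserves_injective_linearMap f.hom hf
  · exact LinearMap.rTensor_surjective (K.X i) hg

lemma torVanish_iff {N : ModuleCat.{0} R} (P : ProjectiveResolution N) (A : ModuleCat.{0} R) (i : ℕ) :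
    TorVanish R A N i ↔ Subsingleton ((tcx A P.complex).homology i) := by
  have e := P.isoLeftDerivedObj ((MonoidalCategory.tensoringLeft (ModuleCat.{0} R)).obj A) i
  exact (e.toLinearEquiv.toEquiv).subsingleton_congr

lemma torVanish_iff' {N : ModuleCat.{0} R} (P : ProjectiveResolution N) (A : ModuleCat.{0} R) (i : ℕ) :
    TorVanish R A N (i+1) ↔ Function.Exact ((P.complex.d (i+2) (i+1)).hom.lTensor A)
      ((P.complex.d (i+1) i).hom.lTensor A) := by
  rw [torVanish_iff P, ← ModuleCat.isZero_iff_subsingleton,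
    ← HomologicalComplex.exactAt_iff_isZero_homology,
    HomologicalComplex.exactAt_iff' _ (i+2) (i+1) i (by simp) (by simp),
    ShortComplex.ShortExact.moduleCat_exact_iff_function_exact]
  rfl

lemma les {A B C : ModuleCat.{0} R} (f : A ⟶ B) (g : B ⟶ C)
    (hf : Function.Injective f.hom) (hg : Function.Surjective g.hom)
    (he : Function.Exact f.hom g.hom)
    (K : ChainComplex (ModuleCat.{0} R) ℕ) [∀ i, Projective (K.X i)] (i : ℕ) :
    Function.Exact (HomologicalComplex.homologyMap (tcxMap f K) i).hom
      (HomologicalComplex.homologyMap (tcxMap g K) i).hom ∧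
    ∃ δ : (tcx C K).homology (i+1) →ₗ[R] (tcx A K).homology i,
      Function.Exact (HomologicalComplex.homologyMap (tcxMap g K) (i+1)).hom δ ∧
      Function.Exact δ (HomologicalComplex.homologyMap (tcxMap f K) i).hom := by
  have h : f ≫ g = 0 := by
    ext x
    exact he.apply_apply_eq_zero x
  have hS := tS_shortExact f g h hf hg he K
  refine ⟨?_, (hS.δ (i+1) i (by simp)).hom, ?_, ?_⟩
  · exact (ShortComplex.ShortExact.moduleCat_exact_iff_function_exact _).1 (hS.homology_exact₂ i)
  · exact (ShortComplex.ShortExact.moduleCat_exact_iff_function_exact _).1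
      (hS.homology_exact₃ (i+1) i (by simp))
  · exact (ShortComplex.ShortExact.moduleCat_exact_iff_function_exact _).1
      (hS.homology_exact₁ (i+1) i (by simp))

lemma homologyMap_smul' {K L : ChainComplex (ModuleCat.{0} R) ℕ} (φ : K ⟶ L) (r : R) (i : ℕ) :
    HomologicalComplex.homologyMap (r • φ) i = r • HomologicalComplex.homologyMap φ i :=
  ShortComplex.homologyMap_smul (a := r)
    (φ := (HomologicalComplex.shortComplexFunctor (ModuleCat.{0} R) _ i).map φ)

lemma homologyMap_mul (A : ModuleCat.{0} R) (r : R) (K : ChainComplex (ModuleCat.{0} R) ℕ) (i : ℕ)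
    (x : (tcx A K).homology i) :
    (HomologicalComplex.homologyMap (tcxMap (ModuleCat.ofHom (LinearMap.lsmul R A r)) K) i).hom x
     = r • x := by
  have h : tcxMap (ModuleCat.ofHom (LinearMap.lsmul R A r)) K = r • 𝟙 (tcx A K) := by
    ext j : 1
    ext : 1
    rw [tcxMap_f]
    apply TensorProduct.ext'
    intro a b
    rfl
  rw [h, homologyMap_smul', HomologicalComplex.homologyMap_id]
  rfl

lemma kill {N : ModuleCat.{0} R} (P : ProjectiveResolution N) (A : ModuleCat.{0} R) (r : R)
    (hr : ∀ n : N, r • n = 0) (i : ℕ) (x : (tcx A P.complex).homology i) : r • x = 0 := by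
  have h0 : (r • 𝟙 P.complex) ≫ P.π = 0 := by
    apply HomologicalComplex.to_single_hom_ext
    ext y
    change (P.π.f 0).hom (r • y) = 0
    rw [map_smul]
    exact hr _
  have hh := (Functor.mapHomotopy ((MonoidalCategory.tensoringLeft (ModuleCat.{0} R)).obj A)
    (ProjectiveResolution.liftHomotopyZero (r • 𝟙 P.complex) h0)).homologyMap_eq i
  have h2 : (((MonoidalCategory.tensoringLeft (ModuleCat.{0} R)).obj A).mapHomologicalComplex
      (ComplexShape.down ℕ)).map (r • 𝟙 P.complex) = r • 𝟙 (tcx A P.complex) := by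
    ext j : 1
    ext : 1
    apply TensorProduct.ext'
    intro a b
    exact TensorProduct.tmul_smul _ _ _
  rw [h2, homologyMap_smul', HomologicalComplex.homologyMap_id, Functor.map_zero,
    HomologicalComplex.homologyMap_zero] at hh
  exact congrArg (fun f => f.hom x) hh

lemma zero_nat {N : ModuleCat.{0} R} (P : ProjectiveResolution N) {A B : ModuleCat.{0} R} (f : A ⟶ B) :
    HomologicalComplex.opcyclesMap (tcxMap f P.complex) 0 ≫
      P.fromLeftDerivedZero' ((MonoidalCategory.tensoringLeft (ModuleCat.{0} R)).obj B) =
    P.fromLeftDerivedZero' ((MonoidalCategory.tensoringLeft (ModuleCat.{0} R)).obj A) ≫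
      ((MonoidalCategory.tensoringLeft (ModuleCat.{0} R)).map f).app N := by
  rw [← cancel_epi (HomologicalComplex.pOpcycles _ _), HomologicalComplex.p_opcyclesMap_assoc,
    ProjectiveResolution.pOpcycles_comp_fromLeftDerivedZero',
    ProjectiveResolution.pOpcycles_comp_fromLeftDerivedZero'_assoc]
  exact (((MonoidalCategory.tensoringLeft (ModuleCat.{0} R)).map f).naturality (P.π.f 0)).symm

noncomputable def zeroEquiv {N : ModuleCat.{0} R} (P : ProjectiveResolution N) (A : ModuleCat.{0} R) :
    (tcx A P.complex).homology 0 ≃ₗ[R] A ⊗[R] N :=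
  ((tcx A P.complex).isoHomologyι₀ ≪≫
   asIso (P.fromLeftDerivedZero' ((MonoidalCategory.tensoringLeft (ModuleCat.{0} R)).obj A))).toLinearEquiv

lemma zeroEquiv_nat {N : ModuleCat.{0} R} (P : ProjectiveResolution N) {A B : ModuleCat.{0} R} (f : A ⟶ B)
    (x : (tcx A P.complex).homology 0) :
    zeroEquiv P B ((HomologicalComplex.homologyMap (tcxMap f P.complex) 0).hom x) =
      f.hom.rTensor N (zeroEquiv P A x) := by
  have h : HomologicalComplex.homologyMap (tcxMap f P.complex) 0 ≫ (tcx B P.complex).isoHomologyι₀.hom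
    ≫ P.fromLeftDerivedZero' ((MonoidalCategory.tensoringLeft (ModuleCat.{0} R)).obj B) =
     ((tcx A P.complex).isoHomologyι₀.hom ≫ P.fromLeftDerivedZero'
       ((MonoidalCategory.tensoringLeft (ModuleCat.{0} R)).obj A)) ≫
      ((MonoidalCategory.tensoringLeft (ModuleCat.{0} R)).map f).app N := by
    rw [Category.assoc, ← zero_nat]
    simp
  exact congrArg (fun f => ModuleCat.Hom.hom f x) h

end Found
end PartA

section PartB
open scoped TensorProduct MonoidalCategory

section Found2
variable {R : Type} [CommRing R]

noncomputable def syzRes {M : ModuleCat.{0} R} (P : ProjectiveResolution M) (K : ModuleCat.{0} R)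
    (p : P.complex.X 1 ⟶ K) (hp : Function.Surjective p.hom)
    (he : Function.Exact (P.complex.d 2 1).hom p.hom) : ProjectiveResolution K where
  complex := ChainComplex.truncate.obj P.complex
  projective := fun n => P.projective (n+1)
  hasHomology := fun n => inferInstance
  π := (ChainComplex.toSingle₀Equiv _ _).symm ⟨p, by
    ext x
    exact he.apply_apply_eq_zero x⟩
  quasiIso := ⟨fun n => by
    cases n
    · rw [ChainComplex.quasiIsoAt₀_iff, ShortComplex.quasiIso_iff_of_zeros']
      · rw [ShortComplex.ShortExact.moduleCat_exact_iff_function_exact, ModuleCat.epi_iff_surjective]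
        constructor
        · exact he
        · exact hp
      all_goals first | rfl | exact P.complex.shape _ _ (by simp)
    · rename_i n
      rw [quasiIsoAt_iff_exactAt']
      · rw [HomologicalComplex.exactAt_iff' _ (n + 2) (n + 1) n (by simp) (by simp)]
        exact P.exact_succ (n+1)
      · apply ChainComplex.exactAt_succ_single_obj⟩

end Found2
section Found3
variable {R : Type} [CommRing R]
variable {A B C : Type} [AddCommGroup A] [Module R A] [AddCommGroup B] [Module R B]
  [AddCommGroup C] [Module R C] {N : Type} [AddCommGroup N] [Module R N]

noncomputable abbrev res (R : Type) [CommRing R] (N : Type) [AddCommGroup N] [Module R N] :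
    ProjectiveResolution (ModuleCat.of R N) := projectiveResolution _

lemma tv_iff (i : ℕ) : TorVanish R A N i ↔
    Subsingleton ((tcx (ModuleCat.of R A) (res R N).complex).homology i) :=
  torVanish_iff (res R N) (ModuleCat.of R A) i

lemma tv_flat [Module.Flat R A] (i : ℕ) : TorVanish R A N (i+1) := by
  refine (torVanish_iff' (res R N) (ModuleCat.of R A) i).2 ?_
  have h := (ShortComplex.ShortExact.moduleCat_exact_iff_function_exact _).1 ((res R N).exact_succ i)
  exact Module.Flat.lTensor_exact A h

variable {f : A →ₗ[R] B} {g : B →ₗ[R] C}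

lemma tv_left (hf : Function.Injective f) (hg : Function.Surjective g) (he : Function.Exact f g)
    (i : ℕ) (h1 : TorVanish R C N (i+1)) (h2 : TorVanish R B N i) : TorVanish R A N i := by
  rw [tv_iff] at *
  obtain ⟨_, δ, ha, hb⟩ := les (ModuleCat.ofHom f) (ModuleCat.ofHom g) hf hg he (res R N).complex i
  refine subsingleton_of_forall_eq 0 fun x => ?_
  obtain ⟨y, rfl⟩ := (hb x).1 (Subsingleton.elim _ _)
  rw [Subsingleton.elim y 0, map_zero]

lemma tv_right (hf : Function.Injective f) (hg : Function.Surjective g) (he : Function.Exact f g)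
    (i : ℕ) (h1 : TorVanish R B N (i+1)) (h2 : TorVanish R A N i) : TorVanish R C N (i+1) := by
  rw [tv_iff] at *
  obtain ⟨_, δ, ha, hb⟩ := les (ModuleCat.ofHom f) (ModuleCat.ofHom g) hf hg he (res R N).complex i
  refine subsingleton_of_forall_eq 0 fun x => ?_
  obtain ⟨y, rfl⟩ := (ha x).1 (Subsingleton.elim _ _)
  rw [Subsingleton.elim y 0, map_zero]

lemma tv_mul {y : R} (hf : IsSMulRegular A y) {g : A →ₗ[R] C} (hg : Function.Surjective g)
    (he : Function.Exact (LinearMap.lsmul R A y) g)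
    (i : ℕ) (h1 : TorVanish R C N (i+1)) (hy : ∀ n : N, (y * y) • n = 0) : TorVanish R A N i := by
  rw [tv_iff] at *
  obtain ⟨_, δ, ha, hb⟩ := les (ModuleCat.ofHom (LinearMap.lsmul R A y)) (ModuleCat.ofHom g)
    hf hg he (res R N).complex i
  have key : ∀ x : (tcx (ModuleCat.of R A) (res R N).complex).homology i, y • x = 0 → x = 0 := by
    intro x hx
    obtain ⟨z, rfl⟩ := (hb x).1 (by
      rw [← hx]
      exact homologyMap_mul (ModuleCat.of R A) y (res R N).complex i x)
    rw [Subsingleton.elim z 0, map_zero]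
  refine subsingleton_of_forall_eq 0 fun x => ?_
  apply key
  apply key
  rw [smul_smul]
  exact kill (res R N) (ModuleCat.of R A) _ hy i x

lemma tv_zero : TorVanish R A N 0 ↔ Subsingleton (A ⊗[R] N) := by
  rw [tv_iff]
  exact (zeroEquiv (res R N) (ModuleCat.of R A)).toEquiv.subsingleton_congr

lemma tv_inj (hf : Function.Injective f) (hg : Function.Surjective g) (he : Function.Exact f g)
    (h1 : TorVanish R C N 1) : Function.Injective (f.rTensor N) := by
  rw [tv_iff] at *
  obtain ⟨_, δ, ha, hb⟩ := les (ModuleCat.ofHom f) (ModuleCat.ofHom g) hf hg he (res R N).complex 0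
  rw [injective_iff_map_eq_zero]
  intro x hx
  obtain ⟨x, rfl⟩ := (zeroEquiv (res R N) (ModuleCat.of R A)).surjective x
  have h2 := (zeroEquiv_nat (res R N) (ModuleCat.ofHom f) x).trans hx
  rw [LinearEquiv.map_eq_zero_iff] at h2 ⊢
  obtain ⟨z, rfl⟩ := (hb x).1 h2
  rw [Subsingleton.elim z 0, map_zero]

lemma tv_of_retract (i : ℕ) (f : A →ₗ[R] B) (g : B →ₗ[R] A) (h : ∀ x, g (f x) = x)
    (hB : TorVanish R B N i) : TorVanish R A N i := by
  have h' : ModuleCat.ofHom f ≫ ModuleCat.ofHom g = 𝟙 _ := by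
    ext x
    exact h x
  have h2 := congrArg (fun φ => ((Tor (ModuleCat R) i).map φ).app (ModuleCat.of R N)) h'
  simp only [CategoryTheory.Functor.map_comp, CategoryTheory.Functor.map_id, NatTrans.comp_app, NatTrans.id_app] at h2
  unfold TorVanish at *
  refine subsingleton_of_forall_eq 0 fun x => ?_
  have h3 := congrArg (fun φ => ModuleCat.Hom.hom φ x) h2
  refine Eq.trans h3.symm ?_
  change ModuleCat.Hom.hom _ (ModuleCat.Hom.hom _ x) = 0
  rw [Subsingleton.elim (ModuleCat.Hom.hom (((Tor (ModuleCat R) i).map (ModuleCat.ofHom f)).app (ModuleCat.of R N)) x) 0, map_zero]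

lemma tv_congr (i : ℕ) (e : A ≃ₗ[R] B) (hB : TorVanish R B N i) : TorVanish R A N i :=
  tv_of_retract i e.toLinearMap e.symm.toLinearMap (by simp) hB

lemma tv_symm_aux (i : ℕ) : ∀ (M N : ModuleCat.{0} R), TorVanish R M N i → TorVanish R N M i := by
  induction i with
  | zero =>
    intro M N h
    rw [tv_zero] at *
    exact (TensorProduct.comm R N M).toEquiv.subsingleton
  | succ i ih =>
    intro M N h
    let P : ProjectiveResolution M := projectiveResolution M
    let g : P.complex.X 0 →ₗ[R] M := (P.π.f 0).hom
    let K : Type := LinearMap.ker g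
    have hg : Function.Surjective g := (ModuleCat.epi_iff_surjective _).1 inferInstance
    have hex0 : Function.Exact (P.complex.d 1 0).hom g :=
      (ShortComplex.ShortExact.moduleCat_exact_iff_function_exact _).1 P.exact₀
    have hex1 : Function.Exact (P.complex.d 2 1).hom (P.complex.d 1 0).hom :=
      (ShortComplex.ShortExact.moduleCat_exact_iff_function_exact _).1 (P.exact_succ 0)
    let p : P.complex.X 1 →ₗ[R] LinearMap.ker g := LinearMap.codRestrict _ (P.complex.d 1 0).hom
      (fun x => hex0.apply_apply_eq_zero x)
    have hp : Function.Surjective p := by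
      rintro ⟨x, hx⟩
      obtain ⟨y, rfl⟩ := (hex0 x).1 hx
      exact ⟨y, rfl⟩
    have hpe : Function.Exact (P.complex.d 2 1).hom p := by
      intro x
      rw [← hex1 x]
      exact Subtype.ext_iff
    have hfl := flat_of_proj (P.complex.X 0)
    have hι : Function.Injective (LinearMap.ker g).subtype := Subtype.val_injective
    have hιe : Function.Exact (LinearMap.ker g).subtype g := LinearMap.exact_subtype_ker_map g
    cases i with
    | zero =>
      have hi := tv_inj hι hg hιe h
      rw [torVanish_iff' P]
      have hi' : Function.Injective ((LinearMap.ker g).subtype.lTensor N) := by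
        exact (LinearMap.lTensor_inj_iff_rTensor_inj _ _).2 hi
      have hc : (P.complex.d 1 0).hom = (LinearMap.ker g).subtype ∘ₗ p := rfl
      have := lTensor_exact N hpe hp
      rw [hc, LinearMap.lTensor_comp]
      exact (Function.Injective.comp_exact_iff_exact hi').2 this
    | succ i =>
      have hK : TorVanish R (ModuleCat.of R (LinearMap.ker g)) N (i+1) :=
        tv_left hι hg hιe (i+1) h (tv_flat i)
      have h2 := ih _ _ hK
      rw [torVanish_iff' P]
      exact (torVanish_iff' (syzRes P (ModuleCat.of R (LinearMap.ker g)) (ModuleCat.ofHom p) hp hpe) N i).1 h2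

lemma tv_symm {i : ℕ} (h : TorVanish R A N i) : TorVanish R N A i :=
  tv_symm_aux i (ModuleCat.of R A) (ModuleCat.of R N) h

lemma tv_subsing [Subsingleton A] (i : ℕ) : TorVanish R A N i := by
  cases i with
  | zero => rw [tv_zero]; infer_instance
  | succ i => exact tv_flat i

lemma homology_finite [IsNoetherianRing R] [Module.Finite R N] (i : ℕ) :
    ∀ (A : ModuleCat.{0} R) [Module.Finite R A],
    Module.Finite R ((tcx A (res R N).complex).homology i) := by
  induction i with
  | zero =>
    intro A _
    exact Module.Finite.equiv (zeroEquiv (res R N) A).symm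
  | succ i ih =>
    intro A _
    obtain ⟨n, g, hg⟩ := Module.Finite.exists_fin' R A
    have hι : Function.Injective (LinearMap.ker g).subtype := Subtype.val_injective
    have hιe : Function.Exact (LinearMap.ker g).subtype g := LinearMap.exact_subtype_ker_map g
    obtain ⟨_, δ, ha, hb⟩ := les (ModuleCat.ofHom (LinearMap.ker g).subtype) (ModuleCat.ofHom g) hι hg hιe (res R N).complex i
    have h0 : TorVanish R (Fin n → R) N (i+1) := tv_flat i
    rw [tv_iff] at h0
    have := ih (ModuleCat.of R (LinearMap.ker g))
    refine Module.Finite.of_injective δ ?_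
    rw [injective_iff_map_eq_zero]
    intro x hx
    obtain ⟨z, rfl⟩ := (ha x).1 hx
    rw [Subsingleton.elim z 0, map_zero]

lemma tv_nak [IsNoetherianRing R] [IsLocalRing R] [Module.Finite R N] [Module.Finite R A]
    {y : R} (hym : y ∈ maximalIdeal R)
    (hf : IsSMulRegular A y) {g : A →ₗ[R] C} (hg : Function.Surjective g)
    (he : Function.Exact (LinearMap.lsmul R A y) g)
    (i : ℕ) (h1 : TorVanish R C N i) : TorVanish R A N i := by
  rw [tv_iff] at *
  obtain ⟨ha, _⟩ := les (ModuleCat.ofHom (LinearMap.lsmul R A y)) (ModuleCat.ofHom g)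
    hf hg he (res R N).complex i
  have := homology_finite (N := N) i (ModuleCat.of R A)
  rw [← Submodule.subsingleton_iff R, ← subsingleton_iff_bot_eq_top, eq_comm]
  apply Submodule.eq_bot_of_le_smul_of_le_jacobson_bot (maximalIdeal R) _ Module.Finite.fg_top
  · intro x _
    obtain ⟨z, hz⟩ := (ha x).1 (Subsingleton.elim _ _)
    have := homologyMap_mul (ModuleCat.of R A) y (res R N).complex i z
    rw [← hz]
    refine this ▸ Submodule.smul_mem_smul hym trivial
  · exact (IsLocalRing.jacobson_eq_maximalIdeal ⊥ bot_ne_top).ge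

end Found3
end PartB

section PartC
open scoped TensorProduct MonoidalCategory Pointwise

section CA
variable {R : Type} [CommRing R]

lemma qs_exact (A : Type) [AddCommGroup A] [Module R A] (y : R) :
    Function.Exact (LinearMap.lsmul R A y) (Submodule.mkQ (y • (⊤ : Submodule R A))) := by
  rw [LinearMap.exact_iff, Submodule.ker_mkQ]
  ext x
  simp [Submodule.mem_smul_pointwise_iff_exists]

lemma tv_quot {N : Type} [AddCommGroup N] [Module R N] (q : ℕ) (xs : List R) :
    ∀ (p : ℕ) (A : Type) [AddCommGroup A] [Module R A], RingTheory.Sequence.IsWeaklyRegular A xs →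
    (∀ i, p ≤ i → i ≤ q → TorVanish R A N i) → ∀ i, p + xs.length ≤ i → i ≤ q →
    TorVanish R (A ⧸ (Ideal.ofList xs • ⊤ : Submodule R A)) N i := by
  induction xs with
  | nil =>
    intro p A _ _ _ h i h1 h2
    refine tv_congr i (Submodule.quotEquivOfEqBot _ ?_) (h i (by simpa using h1) h2)
    simp
  | cons x xs ih =>
    intro p A _ _ hr h i h1 h2
    rw [RingTheory.Sequence.isWeaklyRegular_cons_iff] at hr
    refine tv_congr i (Submodule.quotOfListConsSMulTopEquivQuotSMulTopInner A x xs) ?_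
    refine ih (p+1) _ hr.2 ?_ i (by simp at h1; omega) h2
    intro j h3 h4
    obtain ⟨j, rfl⟩ : ∃ k, j = k + 1 := ⟨j - 1, by omega⟩
    exact tv_right (f := LinearMap.lsmul R A x) hr.1 (Submodule.mkQ_surjective _) (qs_exact A x) j
      (h _ (by omega) h4) (h _ (by omega) (by omega))

lemma tv_depth {N : Type} [AddCommGroup N] [Module R N] (J : Ideal R)
    (hN : ∀ y ∈ J, ∀ n : N, (y * y) • n = 0) (d : ℕ)
    (hd : ∀ (A : Type) [AddCommGroup A] [Module R A], ∀ j, d < j → TorVanish R A N j) (ys : List R) :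
    (∀ y ∈ ys, y ∈ J) → ∀ (A : Type) [AddCommGroup A] [Module R A],
      RingTheory.Sequence.IsWeaklyRegular A ys →
    ∀ j, d < j + ys.length → TorVanish R A N j := by
  induction ys with
  | nil =>
    intro _ A _ _ _ j hj
    exact hd A j (by simpa using hj)
  | cons y ys ih =>
    intro hm A _ _ hr j hj
    rw [RingTheory.Sequence.isWeaklyRegular_cons_iff] at hr
    refine tv_mul hr.1 (Submodule.mkQ_surjective _) (qs_exact A y) j ?_ (hN y (hm y (by simp)))
    exact ih (fun z hz => hm z (by simp [hz])) _ hr.2 (j+1) (by simp at hj; omega)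

variable [IsNoetherianRing R] [IsLocalRing R]

lemma wreg_of_tv {M : Type} [AddCommGroup M] [Module R M] [Module.Finite R M] (xs : List R) :
    (∀ y ∈ xs, y ∈ maximalIdeal R) → ∀ (A : Type) [AddCommGroup A] [Module R A] [Module.Finite R A],
      RingTheory.Sequence.IsWeaklyRegular A xs →
    (∀ j, TorVanish R (A ⧸ (Ideal.ofList xs • ⊤ : Submodule R A)) M (j+1)) →
    (∀ j, TorVanish R A M (j+1)) ∧ RingTheory.Sequence.IsWeaklyRegular (A ⊗[R] M) xs := by
  induction xs with
  | nil =>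
    intro _ A _ _ _ _ h
    refine ⟨fun j => tv_congr (j+1) (Submodule.quotEquivOfEqBot _ ?_).symm (h j), by simp⟩
    simp
  | cons x xs ih =>
    intro hm A _ _ _ hr h
    rw [RingTheory.Sequence.isWeaklyRegular_cons_iff] at hr
    have := ih (fun z hz => hm z (by simp [hz])) (QuotSMulTop x A) hr.2
      (fun j => tv_congr _ (Submodule.quotOfListConsSMulTopEquivQuotSMulTopInner A x xs).symm (h j))
    refine ⟨fun j => tv_nak (hm x (by simp)) hr.1 (Submodule.mkQ_surjective _) (qs_exact A x) _ (this.1 j), ?_⟩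
    rw [RingTheory.Sequence.isWeaklyRegular_cons_iff]
    constructor
    · have h2 := tv_inj (f := LinearMap.lsmul R A x) hr.1 (Submodule.mkQ_surjective _) (qs_exact A x) (this.1 0)
      have h3 : (LinearMap.lsmul R A x).rTensor M = LinearMap.lsmul R (A ⊗[R] M) x :=
        TensorProduct.ext' fun a b => rfl
      rw [h3] at h2
      exact h2
    · exact (LinearEquiv.isWeaklyRegular_congr (QuotSMulTop.quotSMulTopTensorEquivQuotSMulTop x M A) xs).1 this.2

lemma subsing_of_tensor {K : Type} [AddCommGroup K] [Module R K] [Module.Finite R K] (I : Ideal R)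
    (hI : I ≤ maximalIdeal R) (h : Subsingleton (K ⊗[R] (R ⧸ I))) : Subsingleton K := by
  have := (TensorProduct.tensorQuotEquivQuotSMul K I).symm.toEquiv.subsingleton
  rw [Submodule.Quotient.subsingleton_iff] at this
  rw [← Submodule.subsingleton_iff R, ← subsingleton_iff_bot_eq_top, eq_comm]
  refine Submodule.eq_bot_of_le_smul_of_le_jacobson_bot I _ Module.Finite.fg_top this.ge ?_
  exact hI.trans (IsLocalRing.jacobson_eq_maximalIdeal ⊥ bot_ne_top).ge

lemma ker_eq_bot_of_tv {F M : Type} [AddCommGroup F] [Module R F] [Module.Finite R F]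
    [AddCommGroup M] [Module R M] (f : F →ₗ[R] M) (hf : Function.Surjective f)
    (I : Ideal R) (hI : I ≤ maximalIdeal R) (hk : LinearMap.ker f ≤ I • ⊤)
    (h : TorVanish R M (R ⧸ I) 1) : LinearMap.ker f = ⊥ := by
  have hinj := tv_inj (f := (LinearMap.ker f).subtype) Subtype.val_injective hf
    (LinearMap.exact_subtype_ker_map f) h
  have h0 : ∀ x ∈ (I • ⊤ : Submodule R F), x ⊗ₜ[R] (1 : R ⧸ I) = 0 := by
    intro x hx
    refine Submodule.smul_induction_on hx ?_ ?_
    · intro r hr n _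
      rw [TensorProduct.smul_tmul, Algebra.smul_def, mul_one]
      have : algebraMap R (R ⧸ I) r = 0 := Ideal.Quotient.eq_zero_iff_mem.2 hr
      rw [this, TensorProduct.tmul_zero]
    · intro x y hx hy
      rw [TensorProduct.add_tmul, hx, hy, add_zero]
  rw [← Submodule.subsingleton_iff_eq_bot]
  apply subsing_of_tensor I hI
  refine subsingleton_of_forall_eq 0 fun z => ?_
  induction z with
  | zero => rfl
  | add x y hx hy => rw [hx, hy, add_zero]
  | tmul x y =>
    obtain ⟨r, rfl⟩ := Ideal.Quotient.mk_surjective y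
    have h1 : x ⊗ₜ[R] (1 : R ⧸ I) = 0 := by
      apply hinj
      rw [map_zero]
      exact h0 _ (hk x.2)
    have : (Ideal.Quotient.mk I r) = r • (1 : R ⧸ I) := by
      rw [Algebra.smul_def, mul_one]; rfl
    rw [this, TensorProduct.tmul_smul, h1, smul_zero]

lemma exists_min_cover (M : Type) [AddCommGroup M] [Module R M] [Module.Finite R M] :
    ∃ (n : ℕ) (f : (Fin n → R) →ₗ[R] M), Function.Surjective f ∧
      LinearMap.ker f ≤ maximalIdeal R • ⊤ := by
  let b := Module.finBasis (ResidueField R) (ResidueField R ⊗[R] M)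
  have hs : Function.Surjective (TensorProduct.mk R (ResidueField R) M 1) :=
    TensorProduct.mk_surjective R M _ Ideal.Quotient.mk_surjective
  choose v hv using fun i => hs (b i)
  refine ⟨_, Fintype.linearCombination R v, ?_, ?_⟩
  · rw [← LinearMap.range_eq_top, Fintype.range_linearCombination]
    exact span_eq_top_of_tmul_eq_basis v b hv
  · intro c hc
    have h1 := congrArg (TensorProduct.mk R (ResidueField R) M 1) (LinearMap.mem_ker.1 hc)
    rw [Fintype.linearCombination_apply, map_sum, map_zero] at h1
    have h2 : ∑ i, (residue R (c i)) • b i = 0 := by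
      rw [← h1]
      refine Finset.sum_congr rfl fun i _ => ?_
      rw [map_smul, hv]
      exact algebraMap_smul (ResidueField R) (c i) (b i)
    have h3 := Fintype.linearIndependent_iff.1 b.linearIndependent _ h2
    rw [pi_eq_sum_univ' c]
    refine Submodule.sum_mem _ fun i _ => ?_
    exact Submodule.smul_mem_smul ((residue_eq_zero_iff _).1 (h3 i)) trivial

lemma tv_of_free_cover {F M N : Type} [AddCommGroup F] [Module R F] [Module.Flat R F]
    [AddCommGroup M] [Module R M] [AddCommGroup N] [Module R N] (f : F →ₗ[R] M)
    (hf : Function.Surjective f) (hk : LinearMap.ker f = ⊥) (i : ℕ) : TorVanish R M N (i+1) :=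
  tv_congr (i+1) (LinearEquiv.ofBijective f ⟨LinearMap.ker_eq_bot.1 hk, hf⟩).symm (tv_flat i)

lemma tv_of_residue {M : Type} [AddCommGroup M] [Module R M] (p : ℕ) :
    ∀ (N : Type) [AddCommGroup N] [Module R N] [Module.Finite R N],
    TorVanish R N (R ⧸ maximalIdeal R) (p+1) → ∀ i, TorVanish R N M (p+1+i) := by
  induction p with
  | zero =>
    intro N _ _ _ h i
    obtain ⟨n, f, hf, hk⟩ := exists_min_cover (R := R) N
    rw [show 0 + 1 + i = i + 1 by omega]
    exact tv_of_free_cover f hf (ker_eq_bot_of_tv f hf _ le_rfl hk h) i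
  | succ p ih =>
    intro N _ _ _ h i
    obtain ⟨n, f, hf⟩ := Module.Finite.exists_fin' R N
    have h1 := ih (LinearMap.ker f) (tv_left (f := (LinearMap.ker f).subtype) Subtype.val_injective hf
      (LinearMap.exact_subtype_ker_map f) _ h (tv_flat p)) i
    have := tv_right (f := (LinearMap.ker f).subtype) Subtype.val_injective hf
      (LinearMap.exact_subtype_ker_map f) _ (tv_flat _) h1
    rwa [show p + 1 + 1 + i = p + 1 + i + 1 by omega]

lemma residue_retract {W : Type} [AddCommGroup W] [Module R W] [Nontrivial W]
    (hW : ∀ a ∈ maximalIdeal R, ∀ w : W, a • w = 0) :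
    ∃ (f : (R ⧸ maximalIdeal R) →ₗ[R] W) (g : W →ₗ[R] (R ⧸ maximalIdeal R)), ∀ x, g (f x) = x := by
  letI : Field (R ⧸ maximalIdeal R) := Ideal.Quotient.field _
  have ht : Module.IsTorsionBySet R W (maximalIdeal R) := fun w a => hW a a.2 w
  letI : Module (R ⧸ maximalIdeal R) W := ht.module
  haveI : IsScalarTower R (R ⧸ maximalIdeal R) W := ht.isScalarTower
  obtain ⟨w, hw⟩ := exists_ne (0 : W)
  obtain ⟨g, hg⟩ := LinearMap.exists_leftInverse_of_injective
    (LinearMap.toSpanSingleton (R ⧸ maximalIdeal R) W w) (LinearMap.ker_toSpanSingleton _ hw)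
  exact ⟨(LinearMap.toSpanSingleton (R ⧸ maximalIdeal R) W w).restrictScalars R, g.restrictScalars R,
    fun x => LinearMap.congr_fun hg x⟩

end CA
end PartC

section PartE
open scoped TensorProduct MonoidalCategory Pointwise

section EA
variable {R : Type} [CommRing R] [IsNoetherianRing R] [IsLocalRing R]

lemma ofList_le (rs : List R) (hm : ∀ x ∈ rs, x ∈ maximalIdeal R) :
    Ideal.ofList rs ≤ maximalIdeal R := Ideal.span_le.2 fun x hx => hm x hx

noncomputable def quotTopEquiv (I : Ideal R) : (R ⧸ (I • ⊤ : Submodule R R)) ≃ₗ[R] (R ⧸ I) :=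
  Submodule.quotEquivOfEq _ _ (by simp)

lemma tv_base (rs : List R) (hm : ∀ x ∈ rs, x ∈ maximalIdeal R)
    (hr : RingTheory.Sequence.IsWeaklyRegular R rs)
    (h2 : maximalIdeal R ^ 2 ≤ Ideal.ofList rs)
    {M N : Type} [AddCommGroup M] [Module R M] [Module.Finite R M]
    [AddCommGroup N] [Module R N] [Module.Finite R N]
    (hM : ∀ j, TorVanish R M (R ⧸ Ideal.ofList rs) (j+1)) (n : ℕ) (hn : 1 ≤ n)
    (h : ∀ i, n + 1 ≤ i → i ≤ n + 1 + rs.length → TorVanish R M N i) :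
    ∀ i, n + rs.length ≤ i → TorVanish R M N i := by
  intro i hi
  set I := Ideal.ofList rs with hI
  have hIm : I ≤ maximalIdeal R := ofList_le rs hm
  have hrM : RingTheory.Sequence.IsWeaklyRegular M rs := by
    have := (wreg_of_tv (M := M) rs hm R hr
      (fun j => tv_congr _ (quotTopEquiv I) (tv_symm (hM j)))).2
    exact (LinearEquiv.isWeaklyRegular_congr (TensorProduct.lid R M) rs).1 this
  obtain ⟨b, f, hf, hk⟩ := exists_min_cover (R := R) M
  have hrF : RingTheory.Sequence.IsWeaklyRegular (Fin b → R) rs :=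
    (LinearEquiv.isWeaklyRegular_congr (TensorProduct.lid R (Fin b → R)) rs).1
      hr.isWeaklyRegular_rTensor
  have hle : (I • ⊤ : Submodule R (Fin b → R)) ≤ (I • ⊤ : Submodule R M).comap f := by
    rw [← Submodule.map_le_iff_le_comap, Submodule.map_smul'']
    exact Submodule.smul_mono le_rfl le_top
  let g := Submodule.mapQ (I • ⊤ : Submodule R (Fin b → R)) (I • ⊤ : Submodule R M) f hle
  have hg : Function.Surjective g := by
    intro x
    obtain ⟨x, rfl⟩ := Submodule.Quotient.mk_surjective _ x
    obtain ⟨x, rfl⟩ := hf x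
    exact ⟨Submodule.Quotient.mk x, rfl⟩
  have hMb : TorVanish R (M ⧸ (I • ⊤ : Submodule R M)) N (n + rs.length + 1) :=
    tv_quot (n + 1 + rs.length) rs (n+1) M hrM h _ (by omega) (by omega)
  have hFb : TorVanish R ((Fin b → R) ⧸ (I • ⊤ : Submodule R (Fin b → R))) N (n + rs.length) := by
    refine tv_quot (n + rs.length) rs 1 _ hrF ?_ _ (by omega) le_rfl
    intro j hj _
    obtain ⟨j, rfl⟩ : ∃ k, j = k + 1 := ⟨j - 1, by omega⟩
    exact tv_flat j
  have hW : TorVanish R (LinearMap.ker g) N (n + rs.length) :=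
    tv_left (f := (LinearMap.ker g).subtype) Subtype.val_injective hg
      (LinearMap.exact_subtype_ker_map g) _ hMb hFb
  have hlift : ∀ x, g (Submodule.Quotient.mk x) = 0 →
      ∃ y ∈ LinearMap.ker f, x - y ∈ (I • ⊤ : Submodule R (Fin b → R)) := by
    intro x hx
    have hx' : f x ∈ (I • ⊤ : Submodule R M) := (Submodule.Quotient.mk_eq_zero _).1 hx
    have : (I • ⊤ : Submodule R M) = (I • ⊤ : Submodule R (Fin b → R)).map f := by
      rw [Submodule.map_smul'', Submodule.map_top, LinearMap.range_eq_top.2 hf]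
    rw [this] at hx'
    obtain ⟨z, hz, hzx⟩ := hx'
    exact ⟨x - z, by simp [hzx], by simpa using hz⟩
  rcases subsingleton_or_nontrivial (LinearMap.ker g) with hs | hs
  · obtain ⟨i, rfl⟩ : ∃ k, i = k + 1 := ⟨i - 1, by omega⟩
    refine tv_of_free_cover f hf (ker_eq_bot_of_tv f hf I hIm ?_ (hM 0)) i
    intro x hx
    have h0 : g (Submodule.Quotient.mk x) = 0 := by
      change Submodule.Quotient.mk (f x) = 0
      rw [LinearMap.mem_ker.1 hx]; rfl
    have := Subsingleton.elim (⟨_, h0⟩ : LinearMap.ker g) 0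
    exact (Submodule.Quotient.mk_eq_zero _).1 (congrArg Subtype.val this)
  · obtain ⟨u, v, huv⟩ := residue_retract (R := R) (W := LinearMap.ker g) (by
      rintro a ha ⟨w, hw⟩
      obtain ⟨x, rfl⟩ := Submodule.Quotient.mk_surjective _ w
      obtain ⟨y, hy, hxy⟩ := hlift x hw
      apply Subtype.ext
      change a • (Submodule.Quotient.mk x : (Fin b → R) ⧸ (I • ⊤ : Submodule R (Fin b → R))) = 0
      rw [← Submodule.Quotient.mk_smul, Submodule.Quotient.mk_eq_zero]
      have e : a • x = a • (x - y) + a • y := by rw [smul_sub, sub_add_cancel]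
      rw [e]
      refine Submodule.add_mem _ (Submodule.smul_mem _ _ hxy) ?_
      have h3 : a • y ∈ maximalIdeal R • maximalIdeal R • (⊤ : Submodule R (Fin b → R)) :=
        Submodule.smul_mem_smul ha (hk hy)
      rw [← Submodule.mul_smul, ← pow_two] at h3
      exact Submodule.smul_mono_left h2 h3)
    have hkN := tv_symm (tv_of_retract _ u v huv hW)
    obtain ⟨p, hp⟩ : ∃ p, n + rs.length = p + 1 := ⟨n + rs.length - 1, by omega⟩
    rw [hp] at hkN
    have := tv_symm (tv_of_residue (M := M) p N hkN (i - (p + 1)))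
    rwa [show p + 1 + (i - (p + 1)) = i by omega] at this

lemma tv_claim (rs : List R) (hm : ∀ x ∈ rs, x ∈ maximalIdeal R)
    (hr : RingTheory.Sequence.IsWeaklyRegular R rs)
    (h2 : maximalIdeal R ^ 2 ≤ Ideal.ofList rs)
    {N : Type} [AddCommGroup N] [Module R N] [Module.Finite R N] (n : ℕ) (hn : 1 ≤ n) (s : ℕ) :
    ∀ (M : Type) [AddCommGroup M] [Module R M] [Module.Finite R M],
    (∀ j, TorVanish R M (R ⧸ Ideal.ofList rs) (s+j+1)) →
    (∀ i, n + 1 + s ≤ i → i ≤ n + 1 + rs.length + s → TorVanish R M N i) →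
    ∀ i, n + rs.length + s ≤ i → TorVanish R M N i := by
  induction s with
  | zero =>
    intro M _ _ _ hM h i hi
    exact tv_base rs hm hr h2 (fun j => by simpa using hM j) n hn h i hi
  | succ s ih =>
    intro M _ _ _ hM h i hi
    obtain ⟨b, f, hf⟩ := Module.Finite.exists_fin' R M
    have L : ∀ (X : Type) [AddCommGroup X] [Module R X] (j : ℕ), TorVanish R M X (j+1+1) →
        TorVanish R (LinearMap.ker f) X (j+1) := fun X _ _ j hj =>
      tv_left (f := (LinearMap.ker f).subtype) Subtype.val_injective hf
        (LinearMap.exact_subtype_ker_map f) _ hj (tv_flat j)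
    obtain ⟨i, rfl⟩ : ∃ k, i = k + 1 := ⟨i - 1, by omega⟩
    refine tv_right (f := (LinearMap.ker f).subtype) Subtype.val_injective hf
      (LinearMap.exact_subtype_ker_map f) _ (tv_flat _) (ih (LinearMap.ker f) ?_ ?_ i (by omega))
    · intro j
      have := hM j
      rw [show s + 1 + j + 1 = s + j + 1 + 1 by omega] at this
      exact L _ _ this
    · intro j h3 h4
      obtain ⟨j, rfl⟩ : ∃ k, j = k + 1 := ⟨j - 1, by omega⟩
      exact L _ _ (h _ (by omega) (by omega))

lemma tv_core (rs : List R) (hm : ∀ x ∈ rs, x ∈ maximalIdeal R)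
    (hr : RingTheory.Sequence.IsWeaklyRegular R rs)
    (h2 : maximalIdeal R ^ 2 ≤ Ideal.ofList rs)
    (N : Type) [AddCommGroup N] [Module R N] [Module.Finite R N]
    (M : Type) [AddCommGroup M] [Module R M] [Module.Finite R M]
    (ys : List R) (hys : ∀ x ∈ ys, x ∈ maximalIdeal R)
    (hyr : RingTheory.Sequence.IsWeaklyRegular M ys) (n : ℕ) (hn : 1 ≤ n)
    (h : ∀ i, n ≤ i → i ≤ n + (2 * rs.length - ys.length + 1) → TorVanish R M N i) :
    ∀ i, n ≤ i → TorVanish R M N i := by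
  intro i hi
  have hd : ∀ (A : Type) [AddCommGroup A] [Module R A], ∀ j, rs.length < j →
      TorVanish R A (R ⧸ Ideal.ofList rs) j := by
    intro A _ _ j hj
    refine tv_symm (tv_congr j (quotTopEquiv _).symm
      (tv_quot j rs 1 R hr ?_ j (by omega) le_rfl))
    intro k hk _
    obtain ⟨k, rfl⟩ : ∃ l, k = l + 1 := ⟨k - 1, by omega⟩
    exact tv_flat k
  have key := tv_depth (N := R ⧸ Ideal.ofList rs) (maximalIdeal R) (by
    intro y hy x
    obtain ⟨x, rfl⟩ := Ideal.Quotient.mk_surjective x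
    rw [Algebra.smul_def]
    have : algebraMap R (R ⧸ Ideal.ofList rs) (y * y) = 0 :=
      Ideal.Quotient.eq_zero_iff_mem.2 (h2 (by rw [pow_two]; exact Ideal.mul_mem_mul hy hy))
    rw [this, zero_mul]) rs.length hd ys hys M hyr
  rcases lt_or_ge rs.length ys.length with hlt | hge
  · have h0 := tv_zero.1 (key 0 (by omega))
    have := subsing_of_tensor _ (ofList_le rs hm) h0
    exact tv_subsing i
  · by_cases hi' : i ≤ n + (2 * rs.length - ys.length + 1)
    · exact h i hi hi'
    · exact tv_claim rs hm hr h2 n hn (rs.length - ys.length) M (fun j => key _ (by omega))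
        (fun j h3 h4 => h j (by omega) (by omega)) i (by omega)

lemma exists_depth_seq (M : Type) [AddCommGroup M] [Module R M] (t : ℕ) (ht : depth R M = (t : ℕ∞)) :
    ∃ ys : List R, ys.length = t ∧ (∀ x ∈ ys, x ∈ maximalIdeal R) ∧
      RingTheory.Sequence.IsWeaklyRegular M ys := by
  rcases Nat.eq_zero_or_pos t with rfl | hpos
  · exact ⟨[], rfl, by simp, by simp⟩
  unfold depth at ht
  rcases Set.eq_empty_or_nonempty {n : ℕ∞ | ∃ rs : List R, (∀ x ∈ rs, x ∈ maximalIdeal R) ∧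
    RingTheory.Sequence.IsRegular M rs ∧ (rs.length : ℕ∞) = n} with he | hne
  · rw [he, sSup_empty, bot_eq_zero] at ht
    have : t = 0 := by exact_mod_cast ht.symm
    omega
  · have := hne.to_subtype
    obtain ⟨ys, h1, h2, h3⟩ := ENat.sSup_mem_of_nonempty_of_lt_top (ht ▸ ENat.natCast_lt_top t)
    rw [ht] at h3
    exact ⟨ys, by exact_mod_cast h3, h1, h2.toIsWeaklyRegular⟩

end EA
end PartE

theorem statement14 (R : Type) [CommRing R] [IsNoetherianRing R] [IsLocalRing R]
    (d : ℕ) (hdim : ringKrullDim R = (d : WithBot ℕ∞)) (hCM : depth R R = (d : ℕ∞))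
    (hmin : HasMinimalMultiplicity R d)
    (M : Type) [AddCommGroup M] [Module R M] [Module.Finite R M]
    (t : ℕ) (ht : depth R M = (t : ℕ∞)) :
    (∀ (N : ModuleCat R), Module.Finite R N → ∀ n : ℕ, 1 ≤ n →
      (∀ i : ℕ, n ≤ i → i ≤ n + (2 * d - t + 1) → TorVanish R M N i) →
      ∀ i : ℕ, n ≤ i → TorVanish R M N i) ∧
    (∀ (M' : ModuleCat R), Module.Finite R M' → depth R M' = (d : ℕ∞) →
      ∀ (N : ModuleCat R), Module.Finite R N → ∀ n : ℕ, 1 ≤ n →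
      (∀ i : ℕ, n ≤ i → i ≤ n + (d + 1) → TorVanish R M' N i) →
      ∀ i : ℕ, n ≤ i → TorVanish R M' N i) ∧
    (∀ (M' : ModuleCat R), Module.Finite R M' →
      ∀ (N : ModuleCat R), Module.Finite R N → ∀ n : ℕ, 1 ≤ n →
      (∀ i : ℕ, n ≤ i → i ≤ n + (2 * d + 1) → TorVanish R M' N i) →
      ∀ i : ℕ, n ≤ i → TorVanish R M' N i) := by

  obtain ⟨rs, rfl, hm, hr, hmm⟩ := hmin
  have h2 : maximalIdeal R ^ 2 ≤ Ideal.ofList rs := hmm ▸ Ideal.mul_le_left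
  refine ⟨?_, ?_, ?_⟩
  · intro N hN n hn h
    obtain ⟨ys, rfl, hy, hyr⟩ := exists_depth_seq M t ht
    exact tv_core rs hm hr h2 N M ys hy hyr n hn h
  · intro M' hM' hd N hN n hn h
    obtain ⟨ys, hl, hy, hyr⟩ := exists_depth_seq M' _ hd
    exact tv_core rs hm hr h2 N M' ys hy hyr n hn (fun i h3 h4 => h i h3 (by omega))
  · intro M' hM' N hN n hn h
    exact tv_core rs hm hr h2 N M' [] (by simp) (by simp) n hn h
end
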